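/- arXiv:math/0507441 — 4 statements merged into one kernel-verified Lean document; each statement's English description precedes it below -/
import Mathlib

section
/- Escape from subvarieties (Lemma of Eskin–Mozes–Oh, case 𝔾 = SL_d): Let K be an algebraically closed field, d ≥ 2, and let X be a proper Zariski-closed subset of SL_d(K), i.e. X = {g ∈ SL_d(K) : p(g) = 0 for all p ∈ P} for some set P of polynomials in the d² matrix entries with coefficients in K, and X ≠ SL_d(K). Then there is an integer k = k(d,X) such that for every subset Σ ⊆ SL_d(K) with 1 ∈ Σ generating a Zariski dense subgroup of SL_d(K), the set Σ^k is not contained in X. -/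
open Matrix Pointwise


namespace EscapeAux

variable {G K : Type*} [Group G] [Field K]

/-- Right translation on functions. -/
def rt (K : Type*) [Field K] (h : G) : (G → K) →ₐ[K] (G → K) where
  toFun f := fun g => f (g * h)
  map_one' := rfl
  map_mul' _ _ := rfl
  map_zero' := rfl
  map_add' _ _ := rfl
  commutes' _ := rfl

@[simp] theorem rt_apply (h g : G) (f : G → K) : rt K h f g = f (g * h) := rfl

/-- Functions in `V` vanishing on `T`. -/
def van (V : Submodule K (G → K)) (T : Set G) : Submodule K (G → K) where
  carrier := {f | f ∈ V ∧ ∀ g ∈ T, f g = 0}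
  zero_mem' := ⟨V.zero_mem, fun _ _ => rfl⟩
  add_mem' := by
    rintro a b ⟨ha, ha'⟩ ⟨hb, hb'⟩
    exact ⟨V.add_mem ha hb, fun g hg => by simp [ha' g hg, hb' g hg]⟩
  smul_mem' := by
    rintro c a ⟨ha, ha'⟩
    exact ⟨V.smul_mem c ha, fun g hg => by simp [ha' g hg]⟩

theorem mem_van {V : Submodule K (G → K)} {T : Set G} {f : G → K} :
    f ∈ van V T ↔ f ∈ V ∧ ∀ g ∈ T, f g = 0 := Iff.rfl

theorem van_anti (V : Submodule K (G → K)) {T U : Set G} (h : T ⊆ U) : van V U ≤ van V T :=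
  fun _ hf => ⟨hf.1, fun g hg => hf.2 g (h hg)⟩

theorem van_le (V : Submodule K (G → K)) (T : Set G) : van V T ≤ V := fun _ hf => hf.1

theorem mem_van_succ {V : Submodule K (G → K)} (hV : ∀ h : G, ∀ f ∈ V, rt K h f ∈ V)
    {S : Set G} {m : ℕ} {f : G → K} :
    f ∈ van V (S ^ (m + 1)) ↔ f ∈ V ∧ ∀ s ∈ S, rt K s f ∈ van V (S ^ m) := by
  constructor
  · rintro ⟨h1, h2⟩
    refine ⟨h1, fun s hs => ⟨hV s f h1, fun g hg => h2 _ ?_⟩⟩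
    rw [pow_succ]
    exact Set.mul_mem_mul hg hs
  · rintro ⟨h1, h2⟩
    refine ⟨h1, fun g hg => ?_⟩
    rw [pow_succ] at hg
    obtain ⟨a, ha, s, hs, rfl⟩ := Set.mem_mul.1 hg
    exact (h2 s hs).2 a ha

theorem stable {V : Submodule K (G → K)} (hV : ∀ h : G, ∀ f ∈ V, rt K h f ∈ V)
    {S : Set G} {m : ℕ} (hm : van V (S ^ (m + 1)) = van V (S ^ m)) (j : ℕ) :
    van V (S ^ (m + j)) = van V (S ^ m) := by
  induction j with
  | zero => rfl
  | succ j ih =>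
    ext f
    rw [← add_assoc, mem_van_succ hV, ih, ← mem_van_succ hV, hm]

theorem exists_stable {V : Submodule K (G → K)} [FiniteDimensional K V]
    {S : Set G} (h1 : (1 : G) ∈ S) :
    ∃ m ≤ Module.finrank K V, van V (S ^ (m + 1)) = van V (S ^ m) := by
  by_contra! hcon
  have key : ∀ m ≤ Module.finrank K V + 1,
      Module.finrank K (van V (S ^ m)) + m ≤ Module.finrank K V := by
    intro m
    induction m with
    | zero => intro _; exact Submodule.finrank_mono (van_le V _)
    | succ m ih =>
      intro hm
      have h2 := ih (by omega)
      have : FiniteDimensional K (van V (S ^ m)) :=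
        Submodule.finiteDimensional_of_le (van_le V _)
      have h3 : van V (S ^ (m + 1)) < van V (S ^ m) :=
        lt_of_le_of_ne (van_anti V (Set.pow_subset_pow_right h1 (by omega))) (hcon m (by omega))
      have := Submodule.finrank_lt_finrank_of_lt h3
      omega
  have := key _ le_rfl
  omega

theorem main {V : Submodule K (G → K)} [FiniteDimensional K V]
    (hV : ∀ h : G, ∀ f ∈ V, rt K h f ∈ V)
    {S : Set G} (h1 : (1 : G) ∈ S) {f : G → K} (hf : f ∈ V)
    (hv : ∀ g ∈ S ^ (Module.finrank K V), f g = 0) :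
    ∀ g ∈ Subgroup.closure S, f g = 0 := by
  obtain ⟨m, hm, hst⟩ := exists_stable (V := V) h1
  set W := van V (S ^ m) with hW
  have hWfd : FiniteDimensional K W := Submodule.finiteDimensional_of_le (van_le V _)
  have hfW : f ∈ W := van_anti V (Set.pow_subset_pow_right h1 hm) ⟨hf, hv⟩
  have hinv : ∀ s ∈ S, ∀ q ∈ W, rt K s q ∈ W := by
    intro s hs q hq
    rw [← hst] at hq
    exact ((mem_van_succ hV).1 hq).2 s hs
  have hinv' : ∀ s ∈ S, ∀ q ∈ W, rt K s⁻¹ q ∈ W := by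
    intro s hs q hq
    let L : W →ₗ[K] W := (rt K s).toLinearMap.restrict (hinv s hs)
    have hL : Function.Injective L := by
      intro a b hab
      ext g
      have h3 : rt K s a.1 = rt K s b.1 := congrArg Subtype.val hab
      have := congrFun h3 (g * s⁻¹)
      simpa using this
    obtain ⟨a, ha⟩ := LinearMap.surjective_of_injective hL ⟨q, hq⟩
    have : rt K s⁻¹ q = a.1 := by
      have h2 : rt K s a.1 = q := congrArg Subtype.val ha
      rw [← h2]
      ext g
      simp
    rw [this]
    exact a.2
  have hall : ∀ g ∈ Subgroup.closure S, ∀ q ∈ W, rt K g q ∈ W := by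
    intro g hg
    induction hg using Subgroup.closure_induction'' with
    | mem x hx => exact hinv x hx
    | inv_mem x hx => exact hinv' x hx
    | one =>
      intro q hq
      have : rt K (1 : G) q = q := by ext; simp
      rwa [this]
    | mul x y _ _ hx hy =>
      intro q hq
      have : rt K (x * y) q = rt K x (rt K y q) := by ext; simp [mul_assoc]
      rw [this]
      exact hx _ (hy _ hq)
  intro g hg
  have := (hall g hg f hfW).2 1 (by
    have := Set.pow_subset_pow_right (s := S) h1 (Nat.zero_le m)
    exact this (by simp))
  simpa using this

/-- Span of `1` and the coordinate functions. -/
def lin (K : Type*) [Field K] (d : ℕ) :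
    Submodule K (Matrix.SpecialLinearGroup (Fin d) K → K) :=
  1 ⊔ Submodule.span K (Set.range fun ij : Fin d × Fin d =>
    fun g : Matrix.SpecialLinearGroup (Fin d) K => (g : Matrix (Fin d) (Fin d) K) ij.1 ij.2)

theorem one_le_lin (d : ℕ) : 1 ≤ lin K d := le_sup_left

theorem coord_mem_lin (d : ℕ) (i j : Fin d) :
    (fun g : Matrix.SpecialLinearGroup (Fin d) K => (g : Matrix (Fin d) (Fin d) K) i j)
      ∈ lin K d :=
  Submodule.mem_sup_right (Submodule.subset_span ⟨(i, j), rfl⟩)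

theorem lin_fg (d : ℕ) : (lin K d).FG := by
  refine Submodule.FG.sup ?_ (Submodule.fg_span (Set.finite_range _))
  rw [Submodule.one_eq_span]
  exact Submodule.fg_span (Set.finite_singleton _)

theorem lin_map (d : ℕ) (h : Matrix.SpecialLinearGroup (Fin d) K) :
    (lin K d).map (rt K h).toLinearMap ≤ lin K d := by
  unfold lin
  rw [Submodule.map_sup, Submodule.map_one, Submodule.map_span]
  refine sup_le le_sup_left (Submodule.span_le.2 ?_)
  rintro _ ⟨_, ⟨⟨i, j⟩, rfl⟩, rfl⟩
  have : (rt K h).toLinearMap (fun g : Matrix.SpecialLinearGroup (Fin d) K =>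
      (g : Matrix (Fin d) (Fin d) K) i j) =
      ∑ l, (h : Matrix (Fin d) (Fin d) K) l j •
        (fun g : Matrix.SpecialLinearGroup (Fin d) K =>
          (g : Matrix (Fin d) (Fin d) K) i l) := by
    ext g
    simp [Matrix.mul_apply, mul_comm]
  show (rt K h).toLinearMap _ ∈ lin K d
  rw [this]
  exact Submodule.sum_mem _ fun l _ => Submodule.smul_mem _ _ (coord_mem_lin d i l)

theorem pow_inv (d D : ℕ) (h : Matrix.SpecialLinearGroup (Fin d) K) :
    ∀ f ∈ lin K d ^ D, rt K h f ∈ lin K d ^ D := by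
  intro f hf
  have h1 : (lin K d ^ D).map (rt K h).toLinearMap ≤ lin K d ^ D := by
    rw [Submodule.map_pow]
    exact pow_le_pow_left' (lin_map d h) D
  exact h1 (Submodule.mem_map_of_mem hf)

theorem poly_mem (d : ℕ) (p : MvPolynomial (Fin d × Fin d) K) :
    ∃ D, (fun g : Matrix.SpecialLinearGroup (Fin d) K =>
      MvPolynomial.eval (fun ij => (g : Matrix (Fin d) (Fin d) K) ij.1 ij.2) p)
        ∈ lin K d ^ D := by
  induction p using MvPolynomial.induction_on with
  | C a =>
    refine ⟨0, ?_⟩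
    rw [pow_zero, Submodule.mem_one]
    exact ⟨a, by ext; simp⟩
  | add p q hp hq =>
    obtain ⟨D, hD⟩ := hp
    obtain ⟨E, hE⟩ := hq
    refine ⟨D + E, ?_⟩
    simp only [map_add]
    have h1 : lin K d ^ D ≤ lin K d ^ (D + E) :=
      pow_le_pow_right' (one_le_lin d) (Nat.le_add_right D E)
    have h2 : lin K d ^ E ≤ lin K d ^ (D + E) :=
      pow_le_pow_right' (one_le_lin d) (Nat.le_add_left E D)
    exact Submodule.add_mem _ (h1 hD) (h2 hE)
  | mul_X p ij hp =>
    obtain ⟨D, hD⟩ := hp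
    refine ⟨D + 1, ?_⟩
    simp only [map_mul, MvPolynomial.eval_X]
    rw [pow_succ]
    exact Submodule.mul_mem_mul hD (coord_mem_lin d ij.1 ij.2)

end EscapeAux

/-- **Escape from subvarieties (Eskin–Mozes–Oh, case `𝔾 = SL_d`).** Let `K` be an
algebraically closed field and `X` a proper Zariski-closed subset of `SL_d(K)`, cut out by a
set `P` of polynomials in the matrix entries. Then there is `k = k(d, X)` such that for every
`S ⊆ SL_d(K)` with `1 ∈ S` generating a Zariski dense subgroup of `SL_d(K)`, the set `S ^ k`
is not contained in `X`. -/
theorem escape_from_subvarieties {K : Type*} [Field K] [IsAlgClosed K] (d : ℕ) (hd : 2 ≤ d)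
    (P : Set (MvPolynomial (Fin d × Fin d) K))
    (hproper : {g : Matrix.SpecialLinearGroup (Fin d) K |
        ∀ p ∈ P, MvPolynomial.eval (fun ij => (g : Matrix (Fin d) (Fin d) K) ij.1 ij.2) p = 0}
      ≠ Set.univ) :
    ∃ k : ℕ,
      ∀ S : Set (Matrix.SpecialLinearGroup (Fin d) K),
        (1 : Matrix.SpecialLinearGroup (Fin d) K) ∈ S →
        -- the subgroup generated by `S` is Zariski dense in `SL_d(K)`:
        (∀ q : MvPolynomial (Fin d × Fin d) K,
          (∀ g : Matrix.SpecialLinearGroup (Fin d) K, g ∈ Subgroup.closure S →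
            MvPolynomial.eval (fun ij => (g : Matrix (Fin d) (Fin d) K) ij.1 ij.2) q = 0) →
          ∀ g : Matrix.SpecialLinearGroup (Fin d) K,
            MvPolynomial.eval (fun ij => (g : Matrix (Fin d) (Fin d) K) ij.1 ij.2) q = 0) →
        ¬ (S ^ k ⊆ {g : Matrix.SpecialLinearGroup (Fin d) K |
            ∀ p ∈ P, MvPolynomial.eval
              (fun ij => (g : Matrix (Fin d) (Fin d) K) ij.1 ij.2) p = 0}) := by
  obtain ⟨g₀, hg₀⟩ := (Set.ne_univ_iff_exists_notMem _).1 hproper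
  simp only [Set.mem_ofPred_eq, not_forall] at hg₀
  obtain ⟨p, hp, hne⟩ := hg₀
  obtain ⟨D, hD⟩ := EscapeAux.poly_mem d p
  have hfd : FiniteDimensional K (EscapeAux.lin K d ^ D : Submodule K _) :=
    Module.Finite.iff_fg.2 ((EscapeAux.lin_fg d).pow D)
  refine ⟨Module.finrank K (EscapeAux.lin K d ^ D : Submodule K _), fun S h1 hdense hS => hne ?_⟩
  exact hdense p (EscapeAux.main (EscapeAux.pow_inv d D) h1 hD fun g hg => hS hg p hp) g₀
end

section
/- The Margulis lemma (displacement form): For every d ≥ 1 there is a constant ε = ε(d) > 0 such that for every finite set Σ ⊆ SL_d(ℝ), if the subgroup generated by Σ is discrete in SL_d(ℝ) (the induced topology on it is discrete) and is not virtually nilpotent, then E(Σ) = inf_{h ∈ SL_d(ℝ)} sup_{s ∈ Σ} ‖h·s·h⁻¹‖ ≥ 1 + ε, where ‖·‖ is the operator norm on d×d real matrices with respect to the Euclidean norm. -/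
open Matrix Pointwise

/-- The topology on `SL_d(ℝ)` induced from the matrix entries. -/
noncomputable instance {d : ℕ} : TopologicalSpace (Matrix.SpecialLinearGroup (Fin d) ℝ) :=
  inferInstanceAs (TopologicalSpace {A : Matrix (Fin d) (Fin d) ℝ // A.det = 1})

/-- The `ℓ²`-norm of a vector in `ℝᵈ`. -/
noncomputable def rvNorm {d : ℕ} (x : Fin d → ℝ) : ℝ :=
  Real.sqrt (∑ i, x i ^ 2)

/-- The operator norm of a real `d × d` matrix with respect to the Euclidean norm on `ℝᵈ`
(supremum over the closed unit ball). -/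
noncomputable def rOpNorm {d : ℕ} (M : Matrix (Fin d) (Fin d) ℝ) : ℝ :=
  sSup {r : ℝ | ∃ x : Fin d → ℝ, rvNorm x ≤ 1 ∧ r = rvNorm (M.mulVec x)}

section Helpers

theorem aux_nilp {G : Type*} [Group G] {A : Type*} [NormedRing A] (φ : G →* A)
    (C δ η : ℝ) (hδC : 4 * C ^ 2 * δ ≤ 1) (hδ : 0 < δ) (hδ1 : δ ≤ 1) (hη : 0 < η)
    (h1 : ‖(1 : A)‖ ≤ 1)
    (hC : ∀ g, ‖φ g‖ ≤ 2 → ‖φ g⁻¹‖ ≤ C)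
    (hdisc : ∀ g, ‖φ g - 1‖ < η → g = 1)
    (hgen : Subgroup.closure {g : G | ‖φ g - 1‖ < δ} = ⊤) : Group.IsNilpotent G := by
  have hbd : ∀ g, ‖φ g - 1‖ < δ → ‖φ g⁻¹‖ ≤ C := by
    intro g hg
    apply hC
    calc ‖φ g‖ = ‖(φ g - 1) + 1‖ := by simp
      _ ≤ ‖φ g - 1‖ + ‖(1 : A)‖ := norm_add_le _ _
      _ ≤ 2 := by linarith
  have hcomm : ∀ c a, ‖φ c - 1‖ < δ → ‖φ a - 1‖ < δ →
      ‖φ (c * a * c⁻¹ * a⁻¹) - 1‖ ≤ ‖φ c - 1‖ / 2 := by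
    intro c a hc ha
    have e : φ (c * a * c⁻¹ * a⁻¹) - 1 =
        ((φ c - 1) * (φ a - 1) - (φ a - 1) * (φ c - 1)) * φ c⁻¹ * φ a⁻¹ := by
      have e1 : (φ c - 1) * (φ a - 1) - (φ a - 1) * (φ c - 1) = φ (c * a) - φ (a * c) := by
        simp only [map_mul]; noncomm_ring
      rw [e1, sub_mul, sub_mul, ← map_mul, ← map_mul, ← map_mul, ← map_mul]
      simp
    have hc' := hbd c hc
    have ha' := hbd a ha
    have hC0 : 0 ≤ C := (norm_nonneg _).trans hc'
    rw [e]
    have n1 : ‖(φ c - 1) * (φ a - 1) - (φ a - 1) * (φ c - 1)‖ ≤ 2 * δ * ‖φ c - 1‖ := by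
      have q1 := norm_mul_le (φ c - 1) (φ a - 1)
      have q2 := norm_mul_le (φ a - 1) (φ c - 1)
      have q3 := norm_sub_le ((φ c - 1) * (φ a - 1)) ((φ a - 1) * (φ c - 1))
      have q4 := mul_le_mul_of_nonneg_left ha.le (norm_nonneg (φ c - 1))
      linarith
    calc _ ≤ ‖(φ c - 1) * (φ a - 1) - (φ a - 1) * (φ c - 1)‖ * ‖φ c⁻¹‖ * ‖φ a⁻¹‖ :=
          (norm_mul_le _ _).trans
            (mul_le_mul_of_nonneg_right (norm_mul_le _ _) (norm_nonneg _))
      _ ≤ (2 * δ * ‖φ c - 1‖) * C * C := by gcongr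
      _ = (4 * C ^ 2 * δ) * (‖φ c - 1‖ / 2) := by ring
      _ ≤ 1 * (‖φ c - 1‖ / 2) := by gcongr
      _ = _ := one_mul _
  have key : ∀ n : ℕ, ∀ c : G, ‖φ c - 1‖ < δ → ‖φ c - 1‖ < 2 ^ n * η →
      c ∈ Subgroup.upperCentralSeries G n := by
    intro n
    induction n with
    | zero =>
      intro c _ h
      have := hdisc c (by simpa using h)
      rw [this]; exact one_mem _
    | succ n ih =>
      intro c hc h
      rw [Subgroup.mem_upperCentralSeries_succ_iff]
      intro y
      rw [commutatorElement_def]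
      have hy : y ∈ Subgroup.closure {g : G | ‖φ g - 1‖ < δ} := by rw [hgen]; trivial
      induction hy using Subgroup.closure_induction with
      | mem a ha =>
        have := hcomm c a hc ha
        have := norm_nonneg (φ c - 1)
        apply ih
        · linarith
        · rw [pow_succ] at h
          linarith
      | one => simp
      | mul x y _ _ hx hy =>
        have : c * (x * y) * c⁻¹ * (x * y)⁻¹ =
          (c * x * c⁻¹ * x⁻¹) * (x * (c * y * c⁻¹ * y⁻¹) * x⁻¹) := by group
        rw [this]
        exact mul_mem hx (Subgroup.Normal.conj_mem inferInstance _ hy _)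
      | inv x _ hx =>
        have : c * x⁻¹ * c⁻¹ * x⁻¹⁻¹ = x⁻¹ * (c * x * c⁻¹ * x⁻¹)⁻¹ * x⁻¹⁻¹ := by group
        rw [this]
        exact Subgroup.Normal.conj_mem inferInstance _ (inv_mem hx) _
  obtain ⟨n, hn⟩ := pow_unbounded_of_one_lt (δ / η) (one_lt_two)
  rw [div_lt_iff₀ hη] at hn
  refine ⟨n, ?_⟩
  rw [eq_top_iff, ← hgen, Subgroup.closure_le]
  intro g hg
  exact key n g hg (lt_trans hg hn)

theorem aux_index {G : Type*} [Group G] (H : Subgroup G) (T : Set G)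
    (hgen : Subgroup.closure T = ⊤) (N : ℕ)
    (W : ℕ → Set (G ⧸ H)) (hW0 : ((1 : G) : G ⧸ H) ∈ W 0)
    (hWs : ∀ k, W (k + 1) = W k ∪ {x | ∃ t ∈ T, ∃ y ∈ W k, x = t • y})
    (hfin : ∀ k ≤ N, (W k).Finite ∧ (W k).ncard ≤ N) : H.FiniteIndex := by
  have hmono : ∀ k, W k ⊆ W (k + 1) := fun k => by
    rw [hWs]; exact Set.subset_union_left
  have hex : ∃ k < N, W (k + 1) = W k := by
    by_contra! hcon
    have : ∀ k ≤ N, k + 1 ≤ (W k).ncard := by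
      intro k
      induction k with
      | zero =>
        intro _
        exact (Set.ncard_pos (hfin 0 (Nat.zero_le _)).1).2 ⟨_, hW0⟩
      | succ k ih =>
        intro hk
        have := ih (by omega)
        have h2 : (W k).ncard < (W (k + 1)).ncard :=
          Set.ncard_lt_ncard ((hmono k).ssubset_of_ne (hcon k (by omega)).symm)
            (hfin _ hk).1
        omega
    have := this N le_rfl
    have := (hfin N le_rfl).2
    omega
  obtain ⟨k, hk, hkW⟩ := hex
  have hkfin := (hfin k hk.le).1
  have hst : ∀ g : G, (fun x : G ⧸ H => g • x) '' W k = W k := by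
    intro g
    have hg : g ∈ Subgroup.closure T := by rw [hgen]; trivial
    induction hg using Subgroup.closure_induction with
    | mem t ht =>
      apply Set.eq_of_subset_of_ncard_le _ _ hkfin
      · rintro _ ⟨y, hy, rfl⟩
        rw [← hkW, hWs]
        exact Or.inr ⟨t, ht, y, hy, rfl⟩
      · rw [Set.ncard_image_of_injective _ (MulAction.injective t)]
    | one => simp
    | mul x y _ _ hx hy =>
      have : (fun z : G ⧸ H => (x * y) • z) = (fun z => x • z) ∘ (fun z => y • z) := by
        funext z; simp [mul_smul]
      rw [this, Set.image_comp, hy, hx]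
    | inv x _ hx =>
      conv_lhs => rw [← hx]
      rw [← Set.image_comp]
      convert Set.image_id _ using 2
      funext z; simp
  have h0 : ((1 : G) : G ⧸ H) ∈ W k := by
    have : ∀ j, ((1 : G) : G ⧸ H) ∈ W j := by
      intro j
      induction j with
      | zero => exact hW0
      | succ j ih => exact hmono j ih
    exact this k
  have huniv : W k = Set.univ := by
    rw [Set.eq_univ_iff_forall]
    intro x
    induction x using QuotientGroup.induction_on with
    | H g =>
      rw [← hst g]
      refine ⟨_, h0, ?_⟩
      simp
  have : Finite (G ⧸ H) := Set.finite_univ_iff.1 (huniv ▸ hkfin)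
  exact Subgroup.finiteIndex_of_finite_quotient

theorem aux_main {A : Type*} [NormedRing A] [ProperSpace A] (h1 : ‖(1 : A)‖ ≤ 1) (C : ℝ)
    (hC1 : 1 ≤ C) : ∃ ε : ℝ, 0 < ε ∧ ∀ (G : Type) [Group G] (φ : G →* A) (η : ℝ) (T : Set G),
      0 < η → (∀ g, ‖φ g‖ ≤ 2 → ‖φ g⁻¹‖ ≤ C) → (∀ g, ‖φ g - 1‖ < η → g = 1) →
      Subgroup.closure T = ⊤ → (∀ t ∈ T, ‖φ t‖ ≤ 1 + ε) →
      ∃ H : Subgroup G, H.FiniteIndex ∧ Group.IsNilpotent H := by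
  obtain ⟨δ, hδ⟩ : ∃ δ : ℝ, δ = 1 / (4 * C ^ 2) := ⟨_, rfl⟩
  have hδ0 : 0 < δ := by rw [hδ]; positivity
  have hδC : 4 * C ^ 2 * δ ≤ 1 := by rw [hδ]; field_simp; exact le_rfl
  have hδ1 : δ ≤ 1 := by nlinarith
  have hr : 0 < δ / (2 * C) := by positivity
  obtain ⟨t, htf, ht⟩ := Metric.totallyBounded_iff.1
    (isCompact_closedBall (0 : A) 2).totallyBounded _ hr
  obtain ⟨N, hN⟩ : ∃ N : ℕ, N = t.ncard := ⟨_, rfl⟩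
  obtain ⟨ε, hε, hεN⟩ : ∃ ε : ℝ, 0 < ε ∧ (1 + ε) ^ N ≤ 2 := by
    have hcont : ContinuousAt (fun x : ℝ => (1 + x) ^ N) 0 := by fun_prop
    have hev : ∀ᶠ x in nhds (0 : ℝ), (1 + x) ^ N < 2 := by
      apply hcont.eventually_lt continuousAt_const
      simp
    have hev2 : ∀ᶠ x in nhdsWithin (0 : ℝ) (Set.Ioi 0), (1 + x) ^ N < 2 ∧ 0 < x :=
      (hev.filter_mono nhdsWithin_le_nhds).and self_mem_nhdsWithin
    obtain ⟨x, hx, hx0⟩ := hev2.exists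
    exact ⟨x, hx0, hx.le⟩
  refine ⟨ε, hε, ?_⟩
  intro G _ φ η T hη hC hdisc hgen hT
  refine ⟨Subgroup.closure {g : G | ‖φ g - 1‖ < δ}, ?_, ?_⟩
  · set H := Subgroup.closure {g : G | ‖φ g - 1‖ < δ} with hH
    let W : ℕ → Set (G ⧸ H) := fun k => Nat.rec {((1 : G) : G ⧸ H)}
      (fun _ X => X ∪ {x | ∃ t ∈ T, ∃ y ∈ X, x = t • y}) k
    have hWs : ∀ k, W (k + 1) = W k ∪ {x | ∃ t ∈ T, ∃ y ∈ W k, x = t • y} := fun _ => rfl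
    have hrep : ∀ k, ∀ x ∈ W k, ∃ g : G, (g : G ⧸ H) = x ∧ ‖φ g‖ ≤ (1 + ε) ^ k := by
      intro k
      induction k with
      | zero =>
        rintro x rfl
        exact ⟨1, rfl, by simpa using h1⟩
      | succ k ih =>
        intro x hx
        rw [hWs] at hx
        rcases hx with hx | ⟨t, ht, y, hy, rfl⟩
        · obtain ⟨g, hg, hg'⟩ := ih x hx
          refine ⟨g, hg, hg'.trans ?_⟩
          exact pow_le_pow_right₀ (by linarith) (Nat.le_succ k)
        · obtain ⟨g, rfl, hg'⟩ := ih y hy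
          refine ⟨t * g, rfl, ?_⟩
          rw [map_mul, pow_succ']
          exact (norm_mul_le _ _).trans
            (mul_le_mul (hT t ht) hg' (norm_nonneg _) (by linarith))
    apply aux_index H T hgen N W rfl hWs
    intro k hk
    have hrep2 : ∀ x ∈ W k, ∃ g : G, (g : G ⧸ H) = x ∧ ‖φ g‖ ≤ 2 := by
      intro x hx
      obtain ⟨g, hg, hg'⟩ := hrep k x hx
      exact ⟨g, hg, hg'.trans ((pow_le_pow_right₀ (by linarith) hk).trans hεN)⟩
    have hcov : ∀ x ∈ W k, ∃ a ∈ t, ∃ g : G, (g : G ⧸ H) = x ∧ ‖φ g‖ ≤ 2 ∧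
        dist (φ g) a < δ / (2 * C) := by
      intro x hx
      obtain ⟨g, hg, hg'⟩ := hrep2 x hx
      have := ht (show φ g ∈ Metric.closedBall (0 : A) 2 by simpa using hg')
      simp only [Set.mem_iUnion, Metric.mem_ball] at this
      obtain ⟨a, ha, hd⟩ := this
      exact ⟨a, ha, g, hg, hg', hd⟩
    choose! f hf g hg hg2 hgd using hcov
    have hinj : Set.InjOn f (W k) := by
      intro x hx y hy hxy
      rw [← hg x hx, ← hg y hy, QuotientGroup.eq]
      apply Subgroup.subset_closure
      have e : φ ((g x)⁻¹ * g y) - 1 = φ (g x)⁻¹ * (φ (g y) - φ (g x)) := by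
        rw [mul_sub, ← map_mul, ← map_mul]; simp
      have hd : ‖φ (g y) - φ (g x)‖ < δ / C := by
        rw [← dist_eq_norm]
        have a1 := hgd x hx
        have a2 := hgd y hy
        rw [← hxy] at a2
        calc _ ≤ _ := dist_triangle_right _ _ (f x)
          _ < δ / (2 * C) + δ / (2 * C) := add_lt_add a2 a1
          _ = δ / C := by field_simp; ring
      show ‖φ ((g x)⁻¹ * g y) - 1‖ < δ
      rw [e]
      calc _ ≤ ‖φ (g x)⁻¹‖ * ‖φ (g y) - φ (g x)‖ := norm_mul_le _ _
        _ ≤ C * ‖φ (g y) - φ (g x)‖ := by gcongr; exact hC _ (hg2 x hx)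
        _ < C * (δ / C) := by gcongr
        _ = δ := by field_simp
    refine ⟨Set.Finite.of_injOn hf hinj htf, ?_⟩
    rw [hN]
    exact Set.ncard_le_ncard_of_injOn f hf hinj htf
  · refine aux_nilp (φ.comp (Subgroup.subtype _)) C δ η hδC hδ0 hδ1 hη h1
      (fun g => hC g) (fun g hg => Subtype.ext (hdisc g hg)) ?_
    exact Subgroup.closure_closure_coe_preimage

open scoped Matrix.Norms.L2Operator

theorem aux_rv {d : ℕ} (x : Fin d → ℝ) : rvNorm x = ‖WithLp.toLp 2 x‖ := by
  simp [rvNorm, EuclideanSpace.norm_eq]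

theorem aux_norm {d : ℕ} (M : Matrix (Fin d) (Fin d) ℝ) : ‖M‖ ≤ rOpNorm M := by
  have hbdd : BddAbove {r : ℝ | ∃ x : Fin d → ℝ, rvNorm x ≤ 1 ∧ r = rvNorm (M.mulVec x)} := by
    refine ⟨‖M‖, ?_⟩
    rintro r ⟨x, hx, rfl⟩
    rw [aux_rv] at hx ⊢
    exact (Matrix.l2_opNorm_mulVec M (WithLp.toLp 2 x)).trans
      (mul_le_of_le_one_right (norm_nonneg _) hx)
  have h0 : 0 ≤ rOpNorm M := by
    apply Real.sSup_nonneg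
    rintro r ⟨x, hx, rfl⟩
    exact Real.sqrt_nonneg _
  rw [Matrix.l2_opNorm_def]
  apply ContinuousLinearMap.opNorm_le_of_unit_norm (𝕜 := ℝ) h0
  intro x hx
  apply le_csSup hbdd
  refine ⟨x.ofLp, ?_, ?_⟩
  · rw [aux_rv]; exact hx.le
  · rw [aux_rv]; rfl

theorem aux_inv (d : ℕ) : ∃ C : ℝ, 1 ≤ C ∧ ∀ g : Matrix.SpecialLinearGroup (Fin d) ℝ,
    ‖(g : Matrix (Fin d) (Fin d) ℝ)‖ ≤ 2 →
    ‖((g⁻¹ : Matrix.SpecialLinearGroup (Fin d) ℝ) : Matrix (Fin d) (Fin d) ℝ)‖ ≤ C := by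
  have : ProperSpace (Matrix (Fin d) (Fin d) ℝ) := FiniteDimensional.proper ℝ _
  have hc : Continuous (fun M : Matrix (Fin d) (Fin d) ℝ => M.adjugate) :=
    Continuous.matrix_adjugate continuous_id
  obtain ⟨C, hC⟩ := (isCompact_closedBall (0 : Matrix (Fin d) (Fin d) ℝ)
    2).exists_bound_of_continuousOn hc.continuousOn
  refine ⟨max C 1, le_max_right _ _, fun g hg => ?_⟩
  rw [Matrix.SpecialLinearGroup.coe_inv]
  exact (hC _ (by simpa using hg)).trans (le_max_left _ _)

theorem aux_disc {d : ℕ} (Γ : Subgroup (Matrix.SpecialLinearGroup (Fin d) ℝ))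
    (hΓ : DiscreteTopology Γ) (h : Matrix.SpecialLinearGroup (Fin d) ℝ) :
    ∃ η : ℝ, 0 < η ∧ ∀ g : Γ,
      ‖((h * g * h⁻¹ : Matrix.SpecialLinearGroup (Fin d) ℝ) : Matrix (Fin d) (Fin d) ℝ) - 1‖ < η →
      g = 1 := by
  have ho : IsOpen ({1} : Set Γ) := isOpen_discrete _
  obtain ⟨U, hU, hU1⟩ := isOpen_induced_iff.1 ho
  obtain ⟨V, hV, hV1⟩ := isOpen_induced_iff.1 hU
  let f : Matrix (Fin d) (Fin d) ℝ → Matrix (Fin d) (Fin d) ℝ := fun M =>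
    ((h⁻¹ : Matrix.SpecialLinearGroup (Fin d) ℝ) : Matrix (Fin d) (Fin d) ℝ) * M * h
  have hf : Continuous f := by fun_prop
  have key : ∀ g : Γ,
      f ((h * g * h⁻¹ : Matrix.SpecialLinearGroup (Fin d) ℝ) : Matrix (Fin d) (Fin d) ℝ)
        = ((g : Matrix.SpecialLinearGroup (Fin d) ℝ) : Matrix (Fin d) (Fin d) ℝ) := by
    intro g
    show ((h⁻¹ : Matrix.SpecialLinearGroup (Fin d) ℝ) : Matrix (Fin d) (Fin d) ℝ) * _ * h = _
    rw [← Matrix.SpecialLinearGroup.coe_mul, ← Matrix.SpecialLinearGroup.coe_mul]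
    have e : h⁻¹ * (h * (g : Matrix.SpecialLinearGroup (Fin d) ℝ) * h⁻¹) * h = g := by group
    rw [e]
  have mem : ∀ g : Γ, ((g : Matrix.SpecialLinearGroup (Fin d) ℝ) :
      Matrix (Fin d) (Fin d) ℝ) ∈ V ↔ g = 1 := by
    intro g
    have a : g ∈ (Subtype.val ⁻¹' U : Set Γ) ↔ g ∈ ({1} : Set Γ) := by rw [hU1]
    rw [← hV1] at a
    exact a
  have hfo : IsOpen (f ⁻¹' V) := hV.preimage hf
  have h1 : (1 : Matrix (Fin d) (Fin d) ℝ) ∈ f ⁻¹' V := by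
    have k := key 1
    have m := (mem 1).2 rfl
    rw [← k] at m
    simpa using m
  obtain ⟨η, hη, hball⟩ := Metric.isOpen_iff.1 hfo 1 h1
  refine ⟨η, hη, fun g hg => ?_⟩
  have := hball (show _ ∈ Metric.ball _ η from by rw [Metric.mem_ball, dist_eq_norm]; exact hg)
  rw [Set.mem_preimage, key] at this
  exact (mem g).1 this

/-- Conjugation by `h`, as a monoid homomorphism to matrices. -/
noncomputable def conjHom {d : ℕ} (Γ : Subgroup (Matrix.SpecialLinearGroup (Fin d) ℝ))
    (h : Matrix.SpecialLinearGroup (Fin d) ℝ) : Γ →* Matrix (Fin d) (Fin d) ℝ where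
  toFun g := ((h * g * h⁻¹ : Matrix.SpecialLinearGroup (Fin d) ℝ) : Matrix (Fin d) (Fin d) ℝ)
  map_one' := by simp
  map_mul' a b := by
    rw [← Matrix.SpecialLinearGroup.coe_mul]
    have e : h * ((a * b : Γ) : Matrix.SpecialLinearGroup (Fin d) ℝ) * h⁻¹ =
        (h * a * h⁻¹) * (h * b * h⁻¹) := by
      rw [Subgroup.coe_mul]; group
    rw [e]

theorem conjHom_apply {d : ℕ} (Γ : Subgroup (Matrix.SpecialLinearGroup (Fin d) ℝ))
    (h : Matrix.SpecialLinearGroup (Fin d) ℝ) (g : Γ) : conjHom Γ h g =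
    ((h * g * h⁻¹ : Matrix.SpecialLinearGroup (Fin d) ℝ) : Matrix (Fin d) (Fin d) ℝ) := rfl

theorem aux_core (d : ℕ) : ∃ ε : ℝ, 0 < ε ∧
    ∀ (S : Set (Matrix.SpecialLinearGroup (Fin d) ℝ)) (h : Matrix.SpecialLinearGroup (Fin d) ℝ),
      DiscreteTopology (Subgroup.closure S) →
      (∀ s ∈ S, rOpNorm ((h * s * h⁻¹ : Matrix.SpecialLinearGroup (Fin d) ℝ) :
                Matrix (Fin d) (Fin d) ℝ) ≤ 1 + ε) →
      ∃ H : Subgroup (Subgroup.closure S), H.FiniteIndex ∧ Group.IsNilpotent H := by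
  have hP : ProperSpace (Matrix (Fin d) (Fin d) ℝ) := FiniteDimensional.proper ℝ _
  have h1 : ‖(1 : Matrix (Fin d) (Fin d) ℝ)‖ ≤ 1 := by
    refine (aux_norm 1).trans ?_
    apply Real.sSup_le _ zero_le_one
    rintro r ⟨x, hx, rfl⟩
    simpa using hx
  obtain ⟨C, hC1, hC⟩ := aux_inv d
  obtain ⟨ε, hε, hmain⟩ := aux_main h1 C hC1
  refine ⟨ε, hε, fun S h hdisc hS => ?_⟩
  obtain ⟨η, hη, hd⟩ := aux_disc _ hdisc h
  have hgen : Subgroup.closure (Subtype.val ⁻¹' S : Set (Subgroup.closure S)) = ⊤ :=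
    Subgroup.closure_closure_coe_preimage
  have hm := hmain (Subgroup.closure S) (conjHom (Subgroup.closure S) h) η
    (Subtype.val ⁻¹' S) hη
  refine hm ?_ ?_ hgen ?_
  · intro g hg
    rw [conjHom_apply] at hg ⊢
    have e : h * ((g⁻¹ : Subgroup.closure S) : Matrix.SpecialLinearGroup (Fin d) ℝ) * h⁻¹
        = (h * g * h⁻¹)⁻¹ := by
      rw [Subgroup.coe_inv]; group
    rw [e]
    exact hC _ hg
  · intro g hg
    rw [conjHom_apply] at hg
    exact hd g hg
  · intro s hs
    rw [conjHom_apply]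
    exact (aux_norm _).trans (hS s hs)

end Helpers

/-- **The Margulis lemma (displacement form).** For every `d ≥ 1` there is `ε = ε(d) > 0`
such that every finite `S ⊆ SL_d(ℝ)` generating a discrete, non-virtually-nilpotent subgroup
satisfies `E(S) = inf_h sup_{s ∈ S} ‖h s h⁻¹‖ ≥ 1 + ε`. -/
theorem margulis_lemma (d : ℕ) (hd : 1 ≤ d) :
    ∃ ε : ℝ, 0 < ε ∧
      ∀ S : Finset (Matrix.SpecialLinearGroup (Fin d) ℝ),
        DiscreteTopology
          ↥(Subgroup.closure (S : Set (Matrix.SpecialLinearGroup (Fin d) ℝ))) →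
        (¬ ∃ H : Subgroup ↥(Subgroup.closure (S : Set (Matrix.SpecialLinearGroup (Fin d) ℝ))),
          H.FiniteIndex ∧ Group.IsNilpotent ↥H) →
        1 + ε ≤ ⨅ h : Matrix.SpecialLinearGroup (Fin d) ℝ,
          sSup ((fun s : Matrix.SpecialLinearGroup (Fin d) ℝ =>
              rOpNorm ((h * s * h⁻¹ : Matrix.SpecialLinearGroup (Fin d) ℝ) :
                Matrix (Fin d) (Fin d) ℝ)) ''
            (S : Set (Matrix.SpecialLinearGroup (Fin d) ℝ))) := by
  obtain ⟨ε, hε, hmain⟩ := aux_core d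
  refine ⟨ε, hε, fun S hdisc hnil => ?_⟩
  apply le_ciInf
  intro h
  by_contra! hlt
  apply hnil
  refine hmain _ h hdisc (fun s hs => le_trans ?_ hlt.le)
  exact le_csSup (S.finite_toSet.image _).bddAbove ⟨s, hs, rfl⟩
end

section
/- Integral conjugation reducing the norm (Proposition 15): For every d ≥ 2 there are positive constants c₁ = c₁(d) and r₁ = r₁(d) such that for every finite subset Σ of SL_d(ℤ) that generates a Zariski-dense subgroup of SL_d(ℝ), there exists γ ∈ SL_d(ℤ) with sup_{s ∈ Σ} ‖γ·s·γ⁻¹‖ ≤ c₁·E(Σ)^{r₁}, where E(Σ) = inf_{h ∈ SL_d(ℝ)} sup_{s ∈ Σ} ‖h·s·h⁻¹‖ and ‖·‖ is the operator norm on d×d real matrices. -/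
open Matrix Pointwise

open Matrix Pointwise


lemma red_exists {d : ℕ} (P : Matrix (Fin d) (Fin d) ℤ) (hP : P.det ≠ 0) (j : Fin d) :
    ∃ x : Fin d → ℤ, (∀ i, j < i → (P.adjugate *ᵥ x) i = 0) ∧ 0 < (P.adjugate *ᵥ x) j ∧
      (∀ x' : Fin d → ℤ, (∀ i, j < i → (P.adjugate *ᵥ x') i = 0) → 0 < (P.adjugate *ᵥ x') j →
        (P.adjugate *ᵥ x) j ≤ (P.adjugate *ᵥ x') j) ∧
      ∀ i, |(P.adjugate *ᵥ x) i| ≤ |P.det| := by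
  classical
  set A := P.adjugate with hA
  set D := P.det with hD
  have hAP : ∀ y : Fin d → ℤ, A *ᵥ (P *ᵥ y) = D • y := by
    intro y
    rw [mulVec_mulVec, hA, adjugate_mul, smul_mulVec, one_mulVec]
  -- the base vector
  let x0 : Fin d → ℤ := P *ᵥ (Pi.single j (SignType.sign D : ℤ))
  have hx0 : A *ᵥ x0 = Pi.single j |D| := by
    rw [hAP, ← Pi.single_smul, smul_eq_mul, mul_comm, sign_mul_self]
  have hDpos : 0 < |D| := abs_pos.mpr hP
  let Q : ℕ → Prop := fun n => ∃ x : Fin d → ℤ, (∀ i, j < i → (A *ᵥ x) i = 0) ∧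
    0 < (A *ᵥ x) j ∧ (A *ᵥ x) j = n
  have hQ0 : Q (D.natAbs) := by
    refine ⟨x0, ?_, ?_, ?_⟩
    · intro i hi; rw [hx0, Pi.single_eq_of_ne hi.ne']
    · rw [hx0, Pi.single_eq_same]; exact hDpos
    · rw [hx0, Pi.single_eq_same]; simp
  have hex : ∃ n, Q n := ⟨_, hQ0⟩
  obtain ⟨x, hx1, hx2, hx3⟩ := Nat.find_spec hex
  have hmin : ∀ x' : Fin d → ℤ, (∀ i, j < i → (A *ᵥ x') i = 0) → 0 < (A *ᵥ x') j →
        (A *ᵥ x) j ≤ (A *ᵥ x') j := by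
    intro x' h1 h2
    have : Q ((A *ᵥ x') j).toNat := ⟨x', h1, h2, by omega⟩
    have := Nat.find_min' hex this
    omega
  -- reduce the lower coefficients
  let q : Fin d → ℤ := fun i => if i < j then (A *ᵥ x) i / D else 0
  have hy : ∀ i, (A *ᵥ (x - P *ᵥ q)) i = (A *ᵥ x) i - D * q i := by
    intro i
    rw [mulVec_sub, hAP]; simp
  have hge : ∀ i, ¬ i < j → (A *ᵥ (x - P *ᵥ q)) i = (A *ᵥ x) i := by
    intro i hi
    rw [hy]; simp [q, hi]
  refine ⟨x - P *ᵥ q, ?_, ?_, ?_, ?_⟩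
  · intro i hi
    rw [hge i (not_lt.mpr hi.le)]; exact hx1 i hi
  · rw [hge j (lt_irrefl j)]; exact hx2
  · intro x' h1 h2
    rw [hge j (lt_irrefl j)]; exact hmin x' h1 h2
  · intro i
    rcases lt_trichotomy i j with h | h | h
    · rw [hy]
      simp only [q, h, if_true]
      have h1 := Int.emod_nonneg ((A *ᵥ x) i) hP
      have h2 := Int.emod_lt_abs ((A *ᵥ x) i) hP
      have h3 := Int.emod_def ((A *ᵥ x) i) D
      rw [← h3, abs_of_nonneg h1]; exact h2.le
    · subst h
      rw [hge i (lt_irrefl i), abs_of_pos hx2]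
      have := hmin x0 (by intro k hk; rw [hx0, Pi.single_eq_of_ne hk.ne'])
        (by rw [hx0, Pi.single_eq_same]; exact hDpos)
      rw [hx0, Pi.single_eq_same] at this
      exact this
    · rw [hge i (not_lt.mpr h.le), hx1 i h]; simp

lemma red_matrix {d : ℕ} (hd : 0 < d) (P : Matrix (Fin d) (Fin d) ℤ) (hP : P.det ≠ 0) :
    ∃ U : Matrix (Fin d) (Fin d) ℤ, U.det = 1 ∧
      ∀ i j, |(P.adjugate * U) i j| ≤ |P.det| := by
  classical
  choose x hx1 hx2 hx3 hx4 using red_exists P hP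
  set A := P.adjugate with hA
  let X : Matrix (Fin d) (Fin d) ℤ := Matrix.of fun i j => x j i
  have hAX : ∀ i j, (A * X) i j = (A *ᵥ x j) i := by
    intro i j; rfl
  have hsurj : ∀ k : ℕ, k ≤ d → ∀ z : Fin d → ℤ, (∀ i : Fin d, k ≤ i → (A *ᵥ z) i = 0) →
      ∃ c, X *ᵥ c = z := by
    intro k
    induction k with
    | zero =>
      intro _ z hz
      refine ⟨0, ?_⟩
      have h0 : A *ᵥ z = 0 := funext fun i => hz i (Nat.zero_le _)
      have h1 : P *ᵥ (A *ᵥ z) = P.det • z := by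
        rw [mulVec_mulVec, hA, mul_adjugate, smul_mulVec, one_mulVec]
      rw [h0, mulVec_zero] at h1
      rw [mulVec_zero]
      exact ((smul_eq_zero.mp h1.symm).resolve_left hP).symm
    | succ k ih =>
      intro hk z hz
      let j : Fin d := ⟨k, hk⟩
      let q := (A *ᵥ z) j / (A *ᵥ x j) j
      have hz' : ∀ i, (A *ᵥ (z - q • x j)) i = (A *ᵥ z) i - q * (A *ᵥ x j) i := by
        intro i; rw [mulVec_sub, mulVec_smul]; simp
      have hgt : ∀ i, j < i → (A *ᵥ (z - q • x j)) i = 0 := by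
        intro i hi
        rw [hz', hx1 j i hi, hz i (by exact hi)]; simp
      have hj0 : (A *ᵥ (z - q • x j)) j = 0 := by
        by_contra hne
        have e : (A *ᵥ (z - q • x j)) j = (A *ᵥ z) j % (A *ᵥ x j) j := by
          rw [hz', Int.emod_def]; ring
        have h1 := Int.emod_nonneg ((A *ᵥ z) j) (hx2 j).ne'
        have h2 := Int.emod_lt_of_pos ((A *ᵥ z) j) (hx2 j)
        have := hx3 j _ hgt (by omega)
        omega
      obtain ⟨c, hc⟩ := ih (by omega) (z - q • x j) (by
        intro i hi
        rcases eq_or_lt_of_le hi with h | h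
        · have : i = j := Fin.ext h.symm
          rw [this]; exact hj0
        · exact hgt i h)
      refine ⟨c + Pi.single j q, ?_⟩
      rw [mulVec_add, hc]
      have : X *ᵥ (Pi.single j q) = q • x j := by
        ext i; simp [X, mul_comm]
      rw [this]; simp
  have hs : Function.Surjective X.mulVec := by
    intro z
    exact hsurj d le_rfl z (fun i hi => absurd i.2 (by omega))
  have hU : IsUnit X := Matrix.mulVec_surjective_iff_isUnit.mp hs
  have hdet : IsUnit X.det := (Matrix.isUnit_iff_isUnit_det X).mp hU
  rcases Int.isUnit_iff.mp hdet with h | h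
  · exact ⟨X, h, fun i j => by rw [hAX]; exact hx4 j i⟩
  · refine ⟨X * diagonal (Function.update 1 ⟨0, hd⟩ (-1)), ?_, ?_⟩
    · rw [det_mul, h, det_diagonal, Finset.prod_update_of_mem (Finset.mem_univ _)]; simp
    · intro i j
      rw [← Matrix.mul_assoc, mul_diagonal, hAX, abs_mul]
      have : |(Function.update (1 : Fin d → ℤ) ⟨0, hd⟩ (-1)) j| = 1 := by
        by_cases hj : j = ⟨0, hd⟩
        · subst hj; simp
        · simp [hj]
      rw [this, mul_one]; exact hx4 j i


lemma mink {d : ℕ} (hd : 0 < d) (h : Matrix (Fin d) (Fin d) ℝ) (hdet : h.det = 1) :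
    ∃ z : Fin d → ℤ, z ≠ 0 ∧ ‖h *ᵥ (fun i => (z i : ℝ))‖ ≤ 2 := by
  classical
  have hu : IsUnit hᵀ := (Matrix.isUnit_iff_isUnit_det _).mpr (by rw [det_transpose, hdet]; exact isUnit_one)
  have hli : LinearIndependent ℝ hᵀ.row := Matrix.linearIndependent_rows_iff_isUnit.mpr hu
  have : Nonempty (Fin d) := ⟨⟨0, hd⟩⟩
  let b : Module.Basis (Fin d) ℝ (Fin d → ℝ) :=
    basisOfLinearIndependentOfCardEqFinrank hli (by simp)
  have hb : (b : Fin d → Fin d → ℝ) = hᵀ.row := coe_basisOfLinearIndependentOfCardEqFinrank _ _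
  have hvol : MeasureTheory.volume (ZSpan.fundamentalDomain b) = 1 := by
    rw [ZSpan.volume_fundamentalDomain, hb]
    have : Matrix.of hᵀ.row = hᵀ := rfl
    rw [this, det_transpose, hdet]; simp
  have h_fund := ZSpan.isAddFundamentalDomain' b MeasureTheory.volume
  have hlt : MeasureTheory.volume (ZSpan.fundamentalDomain b) * 2 ^ (Module.finrank ℝ (Fin d → ℝ)) <
      MeasureTheory.volume (Metric.ball (0 : Fin d → ℝ) 2) := by
    rw [hvol, Real.volume_pi_ball _ two_pos, one_mul, Module.finrank_fin_fun, Fintype.card_fin,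
      ENNReal.ofReal_pow (by norm_num)]
    refine ENNReal.pow_lt_pow_left hd.ne' ?_
    rw [← ENNReal.ofReal_ofNat]
    exact (ENNReal.ofReal_lt_ofReal_iff (by norm_num)).mpr (by norm_num)
  have : Countable (Submodule.span ℤ (Set.range b)).toAddSubgroup := by
    change Countable (Submodule.span ℤ (Set.range b)); infer_instance
  obtain ⟨⟨x, hx⟩, h_nz, h_mem⟩ :=
    MeasureTheory.exists_ne_zero_mem_lattice_of_measure_mul_two_pow_lt_measure
    h_fund (s := Metric.ball (0 : Fin d → ℝ) 2) (by intro x hx; simpa using hx) (convex_ball _ _) hlt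
  rw [Submodule.mem_toAddSubgroup, Submodule.mem_span_range_iff_exists_fun] at hx
  obtain ⟨c, hc⟩ := hx
  have e : h *ᵥ (fun i => (c i : ℝ)) = x := by
    rw [← hc, hb]
    ext i
    simp [Matrix.mulVec, dotProduct, Finset.sum_apply, mul_comm, Matrix.row]
  refine ⟨c, ?_, ?_⟩
  · rintro rfl
    apply h_nz
    apply Subtype.ext
    simp only
    rw [← e]; ext i; simp [Matrix.mulVec, dotProduct]
  · rw [e]
    have : ‖x‖ < 2 := by simpa using h_mem
    exact this.le

lemma irred {d : ℕ} (G : Set (Matrix.SpecialLinearGroup (Fin d) ℝ))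
    (hZ : ∀ p : MvPolynomial (Fin d × Fin d) ℝ,
          (∀ g : Matrix.SpecialLinearGroup (Fin d) ℝ, g ∈ Subgroup.closure G →
            MvPolynomial.eval (fun ij => (g : Matrix (Fin d) (Fin d) ℝ) ij.1 ij.2) p = 0) →
          ∀ g : Matrix.SpecialLinearGroup (Fin d) ℝ,
            MvPolynomial.eval (fun ij => (g : Matrix (Fin d) (Fin d) ℝ) ij.1 ij.2) p = 0)
    (W : Submodule ℝ (Fin d → ℝ)) (w : Fin d → ℝ) (hwW : w ∈ W) (hw : w ≠ 0)
    (hinv : ∀ g ∈ G, ∀ x ∈ W, (g : Matrix (Fin d) (Fin d) ℝ) *ᵥ x ∈ W) : W = ⊤ := by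
  classical
  by_contra hne
  obtain ⟨f, hf0, hfW⟩ := W.exists_le_ker_of_lt_top (lt_top_iff_ne_top.mpr hne)
  have hall : ∀ g ∈ Subgroup.closure G, ∀ x ∈ W, (g : Matrix (Fin d) (Fin d) ℝ) *ᵥ x ∈ W := by
    intro g hg
    induction hg using Subgroup.closure_induction with
    | mem g hg => exact hinv g hg
    | one => intro x hx; simpa using hx
    | mul a b _ _ ha hb =>
      intro x hx
      have e : ((a * b : SpecialLinearGroup (Fin d) ℝ) : Matrix (Fin d) (Fin d) ℝ) *ᵥ x =
          (a : Matrix (Fin d) (Fin d) ℝ) *ᵥ ((b : Matrix (Fin d) (Fin d) ℝ) *ᵥ x) :=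
        (mulVec_mulVec _ _ _).symm
      exact e ▸ ha _ (hb _ hx)
    | inv a _ ha =>
      intro x hx
      let φ : W →ₗ[ℝ] W := (Matrix.mulVecLin (a : Matrix (Fin d) (Fin d) ℝ)).restrict ha
      have hcancel : ∀ y, ((a⁻¹ : SpecialLinearGroup (Fin d) ℝ) : Matrix (Fin d) (Fin d) ℝ) *ᵥ
          ((a : Matrix (Fin d) (Fin d) ℝ) *ᵥ y) = y := by
        intro y
        have e : ((a⁻¹ : SpecialLinearGroup (Fin d) ℝ) : Matrix (Fin d) (Fin d) ℝ) *
          (a : Matrix (Fin d) (Fin d) ℝ) = 1 := congrArg Subtype.val (inv_mul_cancel a)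
        rw [mulVec_mulVec, e, one_mulVec]
      have hinj : Function.Injective φ := by
        intro u v huv
        have h1 : (a : Matrix (Fin d) (Fin d) ℝ) *ᵥ (u : Fin d → ℝ) =
          (a : Matrix (Fin d) (Fin d) ℝ) *ᵥ (v : Fin d → ℝ) := congrArg Subtype.val huv
        apply Subtype.ext
        rw [← hcancel u, h1, hcancel]
      obtain ⟨y, hy⟩ := (LinearMap.injective_iff_surjective.mp hinj) ⟨x, hx⟩
      have h1 : (a : Matrix (Fin d) (Fin d) ℝ) *ᵥ (y : Fin d → ℝ) = x := congrArg Subtype.val hy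
      rw [← h1, hcancel]; exact y.2
  let φ : Fin d → ℝ := fun i => f (Pi.single i 1)
  have hf : ∀ x, f x = ∑ i, φ i * x i := by
    intro x
    rw [LinearMap.pi_apply_eq_sum_univ f x]
    refine Finset.sum_congr rfl fun i _ => ?_
    rw [smul_eq_mul, mul_comm]
    congr 2
    ext k
    simp [Pi.single_apply, eq_comm]
  let p : MvPolynomial (Fin d × Fin d) ℝ :=
    ∑ i, ∑ j, MvPolynomial.C (φ i * w j) * MvPolynomial.X (i, j)
  have hp : ∀ g : Matrix (Fin d) (Fin d) ℝ,
      MvPolynomial.eval (fun ij => g ij.1 ij.2) p = f (g *ᵥ w) := by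
    intro g
    rw [hf]
    simp only [p, map_sum, map_mul, MvPolynomial.eval_C, MvPolynomial.eval_X, mulVec, dotProduct,
      Finset.mul_sum]
    refine Finset.sum_congr rfl fun i _ => Finset.sum_congr rfl fun j _ => by ring
  have hz := hZ p (by
    intro g hg
    rw [hp]
    exact hfW (hall g hg w hwW))
  have hfw : f w = 0 := hfW hwW
  have hij : ∀ i j, i ≠ j → φ i * w j = 0 := by
    intro i j hij
    have h1 := hz ⟨Matrix.transvection i j 1, Matrix.det_transvection_of_ne i j hij 1⟩
    rw [hp] at h1
    simp only [Matrix.transvection, Matrix.add_mulVec, one_mulVec, map_add, hfw, zero_add] at h1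
    have h2 : Matrix.single i j (1:ℝ) *ᵥ w = w j • Pi.single i 1 := by
      ext k
      simp [Matrix.single_mulVec, Function.update_apply, Pi.single_apply]
    rw [h2, map_smul, smul_eq_mul] at h1
    rw [mul_comm]; exact h1
  obtain ⟨j, hj⟩ := Function.ne_iff.mp hw
  have hφ : ∀ i, i ≠ j → φ i = 0 := fun i hi =>
    (mul_eq_zero.mp (hij i j hi)).resolve_right hj
  have hφj : φ j = 0 := by
    rw [hf, Finset.sum_eq_single j (by intro b _ hb; rw [hφ b hb, zero_mul]) (by simp)] at hfw
    exact (mul_eq_zero.mp hfw).resolve_right hj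
  apply hf0
  ext i
  simp only [LinearMap.comp_apply, LinearMap.zero_apply, LinearMap.single_apply]
  by_cases hi : i = j
  · rw [hi]; exact hφj
  · exact hφ i hi

lemma indep_vectors {d : ℕ} (hd : 0 < d) (S : Set (Matrix.SpecialLinearGroup (Fin d) ℤ))
    (hZ : ∀ p : MvPolynomial (Fin d × Fin d) ℝ,
          (∀ g : Matrix.SpecialLinearGroup (Fin d) ℝ, g ∈ Subgroup.closure
              ((Matrix.SpecialLinearGroup.map (n := Fin d) (Int.castRingHom ℝ)) '' S) →
            MvPolynomial.eval (fun ij => (g : Matrix (Fin d) (Fin d) ℝ) ij.1 ij.2) p = 0) →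
          ∀ g : Matrix.SpecialLinearGroup (Fin d) ℝ,
            MvPolynomial.eval (fun ij => (g : Matrix (Fin d) (Fin d) ℝ) ij.1 ij.2) p = 0)
    (h : Matrix (Fin d) (Fin d) ℝ) (hdet : h.det = 1) (q : ℝ) (hq : 1 ≤ q)
    (hS : ∀ s ∈ S, ∀ x : Fin d → ℝ,
      ‖h *ᵥ ((s : Matrix (Fin d) (Fin d) ℤ).map (Int.cast : ℤ → ℝ) *ᵥ x)‖ ≤ q * ‖h *ᵥ x‖) :
    ∃ P : Matrix (Fin d) (Fin d) ℤ, P.det ≠ 0 ∧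
      ∀ i j, |(h * P.map (Int.cast : ℤ → ℝ)) i j| ≤ 2 * q ^ d := by
  classical
  let T : ℝ → Set (Fin d → ℝ) := fun R =>
    {x | ∃ z : Fin d → ℤ, x = (fun i => (z i : ℝ)) ∧ ‖h *ᵥ x‖ ≤ R}
  have hTmono : ∀ k : ℕ, T (2 * q ^ k) ⊆ T (2 * q ^ (k+1)) := by
    rintro k x ⟨z, hz, hx⟩
    refine ⟨z, hz, hx.trans ?_⟩
    have : q ^ k ≤ q ^ (k+1) := pow_le_pow_right₀ hq (Nat.le_succ k)
    linarith
  obtain ⟨z0, hz0, hz0'⟩ := mink hd h hdet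
  have hw0 : (fun i => (z0 i : ℝ)) ≠ 0 := by
    intro h0; apply hz0; ext i; simpa using congrFun h0 i
  have hmem : ∀ k : ℕ, (fun i => (z0 i : ℝ)) ∈ T (2 * q ^ k) := by
    intro k
    refine ⟨z0, rfl, hz0'.trans ?_⟩
    have := one_le_pow₀ hq (n := k)
    linarith
  have key : ∀ k : ℕ, Submodule.span ℝ (T (2 * q ^ k)) = ⊤ ∨
      k < Module.finrank ℝ (Submodule.span ℝ (T (2 * q ^ k))) := by
    intro k
    induction k with
    | zero =>
      right
      rw [Module.finrank_pos_iff_exists_ne_zero]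
      refine ⟨⟨_, Submodule.subset_span (hmem 0)⟩, ?_⟩
      intro h0; exact hw0 (congrArg Subtype.val h0)
    | succ k ih =>
      have hle := Submodule.span_mono (R := ℝ) (hTmono k)
      rcases ih with ih | ih
      · left; rw [ih] at hle; exact top_le_iff.mp hle
      by_cases htop : Submodule.span ℝ (T (2 * q ^ k)) = ⊤
      · left; rw [htop] at hle; exact top_le_iff.mp hle
      right
      have hlt : Submodule.span ℝ (T (2 * q ^ k)) < Submodule.span ℝ (T (2 * q ^ (k+1))) := by
        refine lt_of_le_of_ne hle ?_
        intro heq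
        apply htop
        refine irred _ hZ _ _ (Submodule.subset_span (hmem k)) hw0 ?_
        rintro _ ⟨s, hs, rfl⟩ x hx
        have e : ((SpecialLinearGroup.map (Int.castRingHom ℝ) s : SpecialLinearGroup (Fin d) ℝ) :
            Matrix (Fin d) (Fin d) ℝ) = (s : Matrix (Fin d) (Fin d) ℤ).map (Int.cast : ℤ → ℝ) := rfl
        rw [e]
        have : Submodule.span ℝ (T (2 * q ^ k)) ≤ (Submodule.span ℝ (T (2 * q ^ (k+1)))).comap
            ((s : Matrix (Fin d) (Fin d) ℤ).map (Int.cast : ℤ → ℝ)).mulVecLin := by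
          rw [Submodule.span_le]
          rintro y ⟨z, rfl, hy⟩
          refine Submodule.subset_span ⟨(s : Matrix (Fin d) (Fin d) ℤ) *ᵥ z, ?_, ?_⟩
          · ext i; simp [mulVec, dotProduct]
          · refine (hS s hs _).trans ?_
            have := mul_le_mul_of_nonneg_left hy (by linarith : (0:ℝ) ≤ q)
            refine this.trans (le_of_eq ?_)
            ring
        rw [heq]
        exact this hx
      have := Submodule.finrank_lt_finrank_of_lt hlt
      omega
  have htop : Submodule.span ℝ (T (2 * q ^ d)) = ⊤ := by
    rcases key d with h1 | h1
    · exact h1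
    · have := Submodule.finrank_le (Submodule.span ℝ (T (2 * q ^ d)))
      rw [Module.finrank_fin_fun] at this
      omega
  obtain ⟨f, hf1, -, hf3⟩ := Submodule.exists_fun_fin_finrank_span_eq ℝ (T (2 * q ^ d))
  have hfr : Module.finrank ℝ (Submodule.span ℝ (T (2 * q ^ d))) = d := by
    rw [htop, finrank_top, Module.finrank_fin_fun]
  let g : Fin d → Fin d → ℝ := f ∘ Fin.cast hfr.symm
  have hg : LinearIndependent ℝ g := hf3.comp _ (Fin.cast_injective _)
  have hgT : ∀ j, g j ∈ T (2 * q ^ d) := fun j => hf1 _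
  choose z hz hzn using hgT
  refine ⟨Matrix.of fun i j => z j i, ?_, ?_⟩
  · intro h0
    have hu : IsUnit (Matrix.of g) := Matrix.linearIndependent_rows_iff_isUnit.mp hg
    have h1 := ((Matrix.isUnit_iff_isUnit_det _).mp hu).ne_zero
    apply h1
    have e : Matrix.of g = ((Matrix.of fun i j => z j i).map (Int.castRingHom ℝ))ᵀ := by
      ext i j; simp [hz i]
    rw [e, det_transpose, ← RingHom.mapMatrix_apply, ← RingHom.map_det, h0, map_zero]
  · intro i j
    have e : (h * (Matrix.of fun i j => z j i).map (Int.cast : ℤ → ℝ)) i j = (h *ᵥ g j) i := by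
      rw [hz j]; rfl
    rw [e]
    exact (norm_le_pi_norm (h *ᵥ g j) i).trans (hzn j)

lemma rvNorm_le {d : ℕ} (y : Fin d → ℝ) (L : ℝ) (hy : ∀ i, |y i| ≤ L) (hL : 0 ≤ L) :
    rvNorm y ≤ d * L := by
  unfold rvNorm
  rw [Real.sqrt_le_iff]
  refine ⟨by positivity, ?_⟩
  have h1 : ∑ i, y i ^ 2 ≤ ∑ _i : Fin d, L ^ 2 :=
    Finset.sum_le_sum fun i _ => sq_le_sq' (abs_le.mp (hy i)).1 (abs_le.mp (hy i)).2
  rw [Finset.sum_const, Finset.card_univ, Fintype.card_fin, nsmul_eq_mul] at h1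
  refine h1.trans ?_
  rw [mul_pow]
  refine mul_le_mul_of_nonneg_right ?_ (sq_nonneg L)
  exact_mod_cast Nat.le_self_pow two_ne_zero d

lemma abs_le_rvNorm {d : ℕ} (x : Fin d → ℝ) (i : Fin d) : |x i| ≤ rvNorm x := by
  unfold rvNorm
  apply Real.abs_le_sqrt
  exact Finset.single_le_sum (f := fun i => x i ^ 2) (fun i _ => sq_nonneg _) (Finset.mem_univ i)

lemma mulVec_abs_le {d : ℕ} (A : Matrix (Fin d) (Fin d) ℝ) (K : ℝ) (hK : ∀ i j, |A i j| ≤ K)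
    (x : Fin d → ℝ) (L : ℝ) (hx : ∀ i, |x i| ≤ L) (i : Fin d) : |(A *ᵥ x) i| ≤ d * (K * L) := by
  have hK0 : 0 ≤ K := (abs_nonneg _).trans (hK i i)
  have h1 : |∑ j, A i j * x j| ≤ ∑ _j : Fin d, K * L := by
    refine (Finset.abs_sum_le_sum_abs _ _).trans (Finset.sum_le_sum fun j _ => ?_)
    rw [abs_mul]
    exact mul_le_mul (hK i j) (hx j) (abs_nonneg _) hK0
  simpa [mulVec, dotProduct] using h1

lemma mul_abs_le {d : ℕ} (A B : Matrix (Fin d) (Fin d) ℝ) (K L : ℝ) (hK : ∀ i j, |A i j| ≤ K)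
    (hL : ∀ i j, |B i j| ≤ L) (i j : Fin d) : |(A * B) i j| ≤ d * (K * L) :=
  mulVec_abs_le A K hK (fun k => B k j) L (fun k => hL k j) i

lemma rOp_mem_le {d : ℕ} (A : Matrix (Fin d) (Fin d) ℝ) (K : ℝ) (hK0 : 0 ≤ K)
    (hK : ∀ i j, |A i j| ≤ K) :
    ∀ r ∈ {r : ℝ | ∃ x : Fin d → ℝ, rvNorm x ≤ 1 ∧ r = rvNorm (A.mulVec x)},
      r ≤ d * (d * (K * 1)) := by
  rintro r ⟨x, hx, rfl⟩
  exact rvNorm_le _ _ (fun i => mulVec_abs_le A K hK x 1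
    (fun j => (abs_le_rvNorm x j).trans hx) i) (by positivity)

lemma rOpNorm_le {d : ℕ} (A : Matrix (Fin d) (Fin d) ℝ) (K : ℝ) (hK0 : 0 ≤ K)
    (hK : ∀ i j, |A i j| ≤ K) : rOpNorm A ≤ d * (d * (K * 1)) :=
  csSup_le ⟨_, 0, by simp [rvNorm], rfl⟩ (rOp_mem_le A K hK0 hK)

lemma entry_le_rOpNorm {d : ℕ} (A : Matrix (Fin d) (Fin d) ℝ) (i j : Fin d) :
    |A i j| ≤ rOpNorm A := by
  classical
  have hb : BddAbove {r : ℝ | ∃ x : Fin d → ℝ, rvNorm x ≤ 1 ∧ r = rvNorm (A.mulVec x)} :=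
    ⟨_, rOp_mem_le A (∑ i, ∑ j, |A i j|)
      (Finset.sum_nonneg fun i _ => Finset.sum_nonneg fun j _ => abs_nonneg _) (by
      intro i j
      refine (Finset.single_le_sum (f := fun j => |A i j|) (fun j _ => abs_nonneg _)
        (Finset.mem_univ j)).trans ?_
      exact Finset.single_le_sum (f := fun i => ∑ j, |A i j|)
        (fun i _ => Finset.sum_nonneg fun j _ => abs_nonneg _) (Finset.mem_univ i))⟩
  have h1 : rvNorm (A *ᵥ (Pi.single j 1)) ≤ rOpNorm A := by
    refine le_csSup hb ⟨Pi.single j 1, ?_, rfl⟩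
    simp [rvNorm, Pi.single_apply]
  refine le_trans ?_ h1
  have := abs_le_rvNorm (A *ᵥ (Pi.single j 1)) i
  simpa using this

lemma det_abs_le {d : ℕ} (A : Matrix (Fin d) (Fin d) ℝ) (K : ℝ) (hK : ∀ i j, |A i j| ≤ K) :
    |A.det| ≤ d.factorial * K ^ d := by
  have := Matrix.det_le (A := A) (abv := AbsoluteValue.abs) (x := K) hK
  simpa using this

lemma adj_abs_le {d : ℕ} (A : Matrix (Fin d) (Fin d) ℝ) (K : ℝ) (h1 : 1 ≤ K)
    (hK : ∀ i j, |A i j| ≤ K) (i j : Fin d) : |A.adjugate i j| ≤ d.factorial * K ^ d := by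
  rw [adjugate_apply]
  refine det_abs_le _ K fun a b => ?_
  rw [updateRow_apply]
  split_ifs
  · rw [Pi.single_apply]; split_ifs
    · simpa using h1
    · simp; linarith
  · exact hK a b

lemma one_le_of_det {d : ℕ} (hd : 0 < d) (A : Matrix (Fin d) (Fin d) ℝ) (hA : A.det = 1) (K : ℝ)
    (hK : ∀ i j, |A i j| ≤ K) : 1 ≤ d * K := by
  have hK0 : 0 ≤ K := (abs_nonneg _).trans (hK ⟨0, hd⟩ ⟨0, hd⟩)
  have h1 := det_abs_le A K hK
  rw [hA, abs_one] at h1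
  have h2 : (d.factorial : ℝ) ≤ (d : ℝ) ^ d := by exact_mod_cast Nat.factorial_le_pow d
  have h3 : 1 ≤ (d * K) ^ d := by
    rw [mul_pow]
    exact h1.trans (mul_le_mul_of_nonneg_right h2 (by positivity))
  by_contra hlt
  push Not at hlt
  have := pow_lt_one₀ (by positivity) hlt hd.ne'
  linarith

/-- The integral part: a good bound for one conjugator. -/
lemma conj_bound {d : ℕ} (hd : 0 < d) (S : Set (Matrix.SpecialLinearGroup (Fin d) ℤ))
    (hZ : ∀ p : MvPolynomial (Fin d × Fin d) ℝ,
          (∀ g : Matrix.SpecialLinearGroup (Fin d) ℝ, g ∈ Subgroup.closure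
              ((Matrix.SpecialLinearGroup.map (n := Fin d) (Int.castRingHom ℝ)) '' S) →
            MvPolynomial.eval (fun ij => (g : Matrix (Fin d) (Fin d) ℝ) ij.1 ij.2) p = 0) →
          ∀ g : Matrix.SpecialLinearGroup (Fin d) ℝ,
            MvPolynomial.eval (fun ij => (g : Matrix (Fin d) (Fin d) ℝ) ij.1 ij.2) p = 0)
    (h : Matrix.SpecialLinearGroup (Fin d) ℝ) (M : ℝ) (hq : 1 ≤ d * M)
    (hM : ∀ s ∈ S, ∀ i j, |((h * Matrix.SpecialLinearGroup.map (n := Fin d)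
                      (Int.castRingHom ℝ) s * h⁻¹ : Matrix.SpecialLinearGroup (Fin d) ℝ) :
                    Matrix (Fin d) (Fin d) ℝ) i j| ≤ M) :
    ∃ γ : Matrix.SpecialLinearGroup (Fin d) ℤ, ∀ s ∈ S, ∀ i j,
      |((Matrix.SpecialLinearGroup.map (n := Fin d) (Int.castRingHom ℝ)
              (γ * s * γ⁻¹) : Matrix.SpecialLinearGroup (Fin d) ℝ) :
            Matrix (Fin d) (Fin d) ℝ) i j| ≤
        d * ((d * ((d.factorial * (d * (2 * (d * M) ^ d * 1)) ^ d) * M)) *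
          (d * (2 * (d * M) ^ d * 1))) := by
  classical
  let ι := Matrix.SpecialLinearGroup.map (n := Fin d) (Int.castRingHom ℝ)
  obtain ⟨P, hP, hPb⟩ := indep_vectors hd S hZ h.1 h.2 (d * M) hq (by
    intro s hs x
    have e : h.1 *ᵥ ((s : Matrix (Fin d) (Fin d) ℤ).map (Int.cast : ℤ → ℝ) *ᵥ x) =
        (h * ι s * h⁻¹).1 *ᵥ (h.1 *ᵥ x) := by
      have e1 : (h * ι s * h⁻¹).1 * h.1 = h.1 * (s : Matrix (Fin d) (Fin d) ℤ).map (Int.cast : ℤ → ℝ) := by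
        have : (h * ι s * h⁻¹) * h = h * ι s := by group
        exact congrArg Subtype.val this
      rw [mulVec_mulVec, mulVec_mulVec, e1]
    rw [e]
    have hM0 : 0 ≤ M := (abs_nonneg _).trans (hM s hs ⟨0, hd⟩ ⟨0, hd⟩)
    refine (pi_norm_le_iff_of_nonneg (by positivity)).mpr fun i => ?_
    rw [mul_assoc (d : ℝ)]
    exact mulVec_abs_le _ M (hM s hs) _ _ (fun j => norm_le_pi_norm (h.1 *ᵥ x) j) i)
  obtain ⟨U, hU, hUb⟩ := red_matrix hd P hP
  let u : SpecialLinearGroup (Fin d) ℤ := ⟨U, hU⟩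
  let B : SpecialLinearGroup (Fin d) ℝ := h * ι u
  set R : ℝ := d * (2 * (d * M) ^ d * 1) with hR
  have hR1 : 1 ≤ R := by
    have h1 : (1:ℝ) ≤ d := by exact_mod_cast hd
    have h2 : 1 ≤ (d * M) ^ d := one_le_pow₀ hq
    rw [hR]; nlinarith
  have hDr : (P.det : ℝ) ≠ 0 := by exact_mod_cast hP
  have hB : ∀ i j, |B.1 i j| ≤ R := by
    intro i j
    have e : B.1 = (h.1 * P.map (Int.cast : ℤ → ℝ)) *
        ((P.det : ℝ)⁻¹ • (P.adjugate * U).map (Int.cast : ℤ → ℝ)) := by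
      have e1 : P.map (Int.cast : ℤ → ℝ) * (P.adjugate * U).map (Int.cast : ℤ → ℝ) =
          (P.det : ℝ) • U.map (Int.cast : ℤ → ℝ) := by
        have e2 : P * (P.adjugate * U) = P.det • U := by
          rw [← Matrix.mul_assoc, mul_adjugate, smul_mul, Matrix.one_mul]
        have e3 := congrArg (fun N => N.map (Int.castRingHom ℝ)) e2
        simp only [Matrix.map_mul] at e3
        have e4 : (P.det • U).map (Int.castRingHom ℝ) = (P.det : ℝ) • U.map (Int.cast : ℤ → ℝ) := by
          ext i j; rw [Matrix.map_apply, Matrix.smul_apply, smul_eq_mul, map_mul]; rfl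
        rw [e4] at e3
        rw [← e3, ← Matrix.map_mul]; rfl
      have e5 : B.1 = h.1 * U.map (Int.cast : ℤ → ℝ) := rfl
      rw [Matrix.mul_smul, Matrix.mul_assoc, e1, Matrix.mul_smul, smul_smul, inv_mul_cancel₀ hDr,
        one_smul, e5]
    rw [e]
    refine mul_abs_le _ _ _ _ hPb ?_ i j
    intro k l
    simp only [Matrix.smul_apply, Matrix.map_apply, smul_eq_mul, abs_mul, abs_inv]
    rw [inv_mul_le_iff₀ (abs_pos.mpr hDr), mul_one]
    exact_mod_cast hUb k l
  refine ⟨u⁻¹, fun s hs => ?_⟩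
  have e : ι (u⁻¹ * s * u⁻¹⁻¹) = B⁻¹ * (h * ι s * h⁻¹) * B := by
    simp only [B, map_mul, map_inv]; group
  have e' : ((ι (u⁻¹ * s * u⁻¹⁻¹) : SpecialLinearGroup (Fin d) ℝ) : Matrix (Fin d) (Fin d) ℝ) =
      B.1.adjugate * (h * ι s * h⁻¹).1 * B.1 := by
    rw [e]; rfl
  intro i j
  change |(ι (u⁻¹ * s * u⁻¹⁻¹)).1 i j| ≤ _
  rw [e']
  exact mul_abs_le _ _ _ _ (mul_abs_le _ _ _ _ (adj_abs_le _ R hR1 hB) (hM s hs)) hB i j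


/-- **Integral conjugation reducing the norm (Proposition 15).** For every `d ≥ 2` there are
`c₁, r₁ > 0` such that for every finite `S ⊆ SL_d(ℤ)` generating a Zariski-dense subgroup of
`SL_d(ℝ)` there is `γ ∈ SL_d(ℤ)` with `sup_{s ∈ S} ‖γ s γ⁻¹‖ ≤ c₁ · E(S)^{r₁}`, where
`E(S) = inf_{h ∈ SL_d(ℝ)} sup_{s ∈ S} ‖h s h⁻¹‖`. -/
theorem integral_conjugation_reducing_norm (d : ℕ) (hd : 2 ≤ d) :
    ∃ c₁ r₁ : ℝ, 0 < c₁ ∧ 0 < r₁ ∧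
      ∀ S : Finset (Matrix.SpecialLinearGroup (Fin d) ℤ),
        -- the subgroup generated by the image of `S` is Zariski dense in `SL_d(ℝ)`:
        (∀ p : MvPolynomial (Fin d × Fin d) ℝ,
          (∀ g : Matrix.SpecialLinearGroup (Fin d) ℝ,
            g ∈ Subgroup.closure
              ((Matrix.SpecialLinearGroup.map (n := Fin d) (Int.castRingHom ℝ)) ''
                (S : Set (Matrix.SpecialLinearGroup (Fin d) ℤ))) →
            MvPolynomial.eval (fun ij => (g : Matrix (Fin d) (Fin d) ℝ) ij.1 ij.2) p = 0) →
          ∀ g : Matrix.SpecialLinearGroup (Fin d) ℝ,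
            MvPolynomial.eval (fun ij => (g : Matrix (Fin d) (Fin d) ℝ) ij.1 ij.2) p = 0) →
        ∃ γ : Matrix.SpecialLinearGroup (Fin d) ℤ, ∀ s ∈ S,
          rOpNorm ((Matrix.SpecialLinearGroup.map (n := Fin d) (Int.castRingHom ℝ)
              (γ * s * γ⁻¹) : Matrix.SpecialLinearGroup (Fin d) ℝ) :
            Matrix (Fin d) (Fin d) ℝ) ≤
          c₁ * (⨅ h : Matrix.SpecialLinearGroup (Fin d) ℝ,
              sSup ((fun t : Matrix.SpecialLinearGroup (Fin d) ℤ =>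
                  rOpNorm ((h * Matrix.SpecialLinearGroup.map (n := Fin d)
                      (Int.castRingHom ℝ) t * h⁻¹ : Matrix.SpecialLinearGroup (Fin d) ℝ) :
                    Matrix (Fin d) (Fin d) ℝ)) ''
                (S : Set (Matrix.SpecialLinearGroup (Fin d) ℤ)))) ^ r₁ := by
  have hd0 : 0 < d := by omega
  have hdr : (0 : ℝ) < d := by exact_mod_cast hd0
  refine ⟨(d : ℝ) ^ 4 * d.factorial * (2 * d) ^ (d + 1) * (2 * d) ^ (d * (d + 1) + 1),
    ((d * (d + 1) + 1 : ℕ) : ℝ), by positivity, by positivity, ?_⟩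
  intro S hZ
  rcases S.eq_empty_or_nonempty with rfl | hne
  · exact ⟨1, fun s hs => by simp at hs⟩
  set F : Matrix.SpecialLinearGroup (Fin d) ℝ → ℝ := fun h =>
    sSup ((fun t : Matrix.SpecialLinearGroup (Fin d) ℤ =>
                  rOpNorm ((h * Matrix.SpecialLinearGroup.map (n := Fin d)
                      (Int.castRingHom ℝ) t * h⁻¹ : Matrix.SpecialLinearGroup (Fin d) ℝ) :
                    Matrix (Fin d) (Fin d) ℝ)) ''
                (S : Set (Matrix.SpecialLinearGroup (Fin d) ℤ))) with hF
  change ∃ γ : Matrix.SpecialLinearGroup (Fin d) ℤ, ∀ s ∈ S, _ ≤ _ * (⨅ h, F h) ^ _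
  have hFe : ∀ h, ∀ s ∈ S, ∀ i j, |((h * Matrix.SpecialLinearGroup.map (n := Fin d)
                      (Int.castRingHom ℝ) s * h⁻¹ : Matrix.SpecialLinearGroup (Fin d) ℝ) :
                    Matrix (Fin d) (Fin d) ℝ) i j| ≤ F h := by
    intro h s hs i j
    refine (entry_le_rOpNorm _ i j).trans ?_
    exact le_csSup ((S.finite_toSet.image _).bddAbove) ⟨s, hs, rfl⟩
  have hF1 : ∀ h, (d : ℝ)⁻¹ ≤ F h := by
    intro h
    obtain ⟨s, hs⟩ := hne
    have := one_le_of_det hd0 _ (h * Matrix.SpecialLinearGroup.map (n := Fin d)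
                      (Int.castRingHom ℝ) s * h⁻¹).2 (F h) (hFe h s hs)
    rw [inv_le_iff_one_le_mul₀ hdr, mul_comm]; exact this
  set E := ⨅ h, F h with hE
  have hEd : (d : ℝ)⁻¹ ≤ E := le_ciInf hF1
  have hEpos : 0 < E := lt_of_lt_of_le (by positivity) hEd
  obtain ⟨h, hh⟩ := exists_lt_of_ciInf_lt (show ⨅ h, F h < 2 * E by linarith)
  have hq : 1 ≤ d * (2 * E) := by
    rw [inv_le_iff_one_le_mul₀ hdr] at hEd
    nlinarith
  obtain ⟨γ, hγ⟩ := conj_bound hd0 (S : Set (Matrix.SpecialLinearGroup (Fin d) ℤ)) hZ h (2 * E) hq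
    (fun s hs i j => (hFe h s hs i j).trans hh.le)
  refine ⟨γ, fun s hs => ?_⟩
  refine (rOpNorm_le _ _ (by positivity) (hγ s hs)).trans ?_
  rw [Real.rpow_natCast]
  have h1 : (d : ℝ) * (2 * E) = (2 * d) * E := by ring
  have h2 : 2 * E ≤ (2 * d) * E := by
    have : (1 : ℝ) ≤ d := by exact_mod_cast hd0
    nlinarith
  rw [h1]
  set q : ℝ := (2 * d) * E with hqdef
  have hq0 : 0 ≤ q := by positivity
  calc _ ≤ (d:ℝ) * (d * (d * ((d * ((d.factorial * (d * (2 * q ^ d * 1)) ^ d) * q)) *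
          (d * (2 * q ^ d * 1))) * 1)) := by gcongr
    _ = (d : ℝ) ^ 4 * d.factorial * (2 * d) ^ (d + 1) * q ^ (d * (d + 1) + 1) := by
        have : (d * (2 * q ^ d * 1)) = (2 * d) * q ^ d := by ring
        rw [this, mul_pow, ← pow_mul]; ring
    _ = _ := by rw [hqdef, mul_pow]; ring
end

section
/- Quantitative Kazhdan–Margulis lemma: For every d ≥ 2 there are positive constants k₀ = k₀(d) and l₀ = l₀(d) such that for every h ∈ SL_d(ℝ), the group h·SL_d(ℤ)·h⁻¹ contains a non-trivial unipotent element u (i.e. u ≠ 1 and (u − 1)^d = 0) with ‖u − 1‖ ≤ l₀·‖π(h)‖^{−k₀}, where ‖π(h)‖ = inf{‖h·γ‖ : γ ∈ SL_d(ℤ)}. -/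
open Matrix Pointwise

def qf {n : ℕ} (G : Matrix (Fin n) (Fin n) ℝ) (x : Fin n → ℝ) : ℝ := x ⬝ᵥ G *ᵥ x

lemma qf_conj {n : ℕ} (G A : Matrix (Fin n) (Fin n) ℝ) (x : Fin n → ℝ) :
    qf (Aᵀ * G * A) x = qf G (A *ᵥ x) := by
  unfold qf
  rw [← mulVec_mulVec, ← mulVec_mulVec, dotProduct_mulVec, vecMul_transpose]

lemma qf_schur {n : ℕ} (G : Matrix (Fin (n+1)) (Fin (n+1)) ℝ) (hs : Gᵀ = G) (h0 : G 0 0 ≠ 0)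
    (x : Fin (n+1) → ℝ) :
    qf G x = G 0 0 * (x 0 + (fun j => G 0 (Fin.succ j) / G 0 0) ⬝ᵥ (fun j => x (Fin.succ j))) ^ 2
      + qf (Matrix.of fun i j => G (Fin.succ i) (Fin.succ j)
          - G 0 (Fin.succ i) * G 0 (Fin.succ j) / G 0 0) (fun j => x (Fin.succ j)) := by
  have hs' : ∀ i j, G i j = G j i := fun i j => by conv_lhs => rw [← hs, transpose_apply]
  set S := ∑ j : Fin n, G 0 j.succ * x j.succ with hS
  set T := ∑ i : Fin n, x i.succ * ∑ j : Fin n, G i.succ j.succ * x j.succ with hT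
  have e1 : qf G x = G 0 0 * x 0 ^ 2 + 2 * x 0 * S + T := by
    simp only [qf, dotProduct, mulVec, Fin.sum_univ_succ, mul_add, Finset.sum_add_distrib]
    rw [← hT, ← hS]
    have : ∑ i : Fin n, x i.succ * (G i.succ 0 * x 0) = x 0 * S := by
      rw [hS, Finset.mul_sum]
      refine Finset.sum_congr rfl fun i _ => ?_
      rw [hs' i.succ 0]; ring
    rw [this]; ring
  have e2 : (fun j => G 0 (Fin.succ j) / G 0 0) ⬝ᵥ (fun j => x (Fin.succ j)) = S / G 0 0 := by
    simp only [dotProduct, hS, Finset.sum_div]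
    exact Finset.sum_congr rfl fun i _ => by ring
  have e3 : qf (Matrix.of fun i j => G (Fin.succ i) (Fin.succ j)
          - G 0 (Fin.succ i) * G 0 (Fin.succ j) / G 0 0) (fun j => x (Fin.succ j))
          = T - S ^ 2 / G 0 0 := by
    simp only [qf, dotProduct, mulVec, of_apply, sub_mul, Finset.sum_sub_distrib, mul_sub]
    rw [← hT]
    congr 1
    have : S ^ 2 / G 0 0 = ∑ i : Fin n, x i.succ * G 0 i.succ * (S / G 0 0) := by
      rw [← Finset.sum_mul]
      have : ∑ i : Fin n, x i.succ * G 0 i.succ = S :=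
        Finset.sum_congr rfl fun i _ => by ring
      rw [this]; ring
    rw [this]
    refine Finset.sum_congr rfl fun i _ => ?_
    rw [hS, Finset.sum_div, Finset.mul_sum, Finset.mul_sum]
    exact Finset.sum_congr rfl fun i _ => by ring
  rw [e1, e2, e3]
  field_simp
  ring

lemma qf_lower {n : ℕ} (G : Matrix (Fin n) (Fin n) ℝ) (hp : ∀ x, x ≠ 0 → 0 < qf G x) :
    ∃ c : ℝ, 0 < c ∧ ∀ x : Fin n → ℝ, 1 ≤ ‖x‖ → c ≤ qf G x := by
  have hsm : ∀ (t : ℝ) x, qf G (t • x) = t ^ 2 * qf G x := by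
    intro t x
    simp only [qf, mulVec_smul, dotProduct_smul, smul_dotProduct, smul_eq_mul]; ring
  have hc : Continuous (qf G) := by
    unfold qf; fun_prop
  by_cases hne : (Metric.sphere (0 : Fin n → ℝ) 1).Nonempty
  · obtain ⟨y, hy, hmin⟩ := (isCompact_sphere (0 : Fin n → ℝ) 1).exists_isMinOn hne hc.continuousOn
    have hy1 : ‖y‖ = 1 := by simpa using hy
    have hy0 : y ≠ 0 := by rintro rfl; simp at hy1
    refine ⟨qf G y, hp y hy0, fun x hx => ?_⟩
    have hx0 : 0 < ‖x‖ := by linarith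
    have h1 : qf G y ≤ qf G (‖x‖⁻¹ • x) := hmin (by
      simp [norm_smul, hx0.ne'])
    have h2 : qf G x = ‖x‖ ^ 2 * qf G (‖x‖⁻¹ • x) := by
      rw [← hsm, smul_smul, mul_inv_cancel₀ hx0.ne', one_smul]
    rw [h2]
    have h3 := hp y hy0
    have h4 : 1 ≤ ‖x‖ ^ 2 := one_le_pow₀ hx
    nlinarith
  · refine ⟨1, one_pos, fun x hx => (hne ⟨‖x‖⁻¹ • x, ?_⟩).elim⟩
    have hx0 : 0 < ‖x‖ := by linarith
    simp [norm_smul, hx0.ne']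

/-- real cast of integer matrix -/
noncomputable abbrev rc {n : ℕ} (A : Matrix (Fin n) (Fin n) ℤ) : Matrix (Fin n) (Fin n) ℝ :=
  A.map (Int.castRingHom ℝ)

lemma rc_mul {n : ℕ} (A B : Matrix (Fin n) (Fin n) ℤ) : rc (A * B) = rc A * rc B :=
  Matrix.map_mul

lemma rc_det {n : ℕ} (A : Matrix (Fin n) (Fin n) ℤ) (h : A.det = 1) : (rc A).det = 1 := by
  have := (Int.castRingHom ℝ).map_det A
  rw [h, map_one] at this
  exact this.symm

lemma mulVec_ne {n : ℕ} (A : Matrix (Fin n) (Fin n) ℝ) (h : A.det = 1) (x : Fin n → ℝ)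
    (hx : x ≠ 0) : A *ᵥ x ≠ 0 := by
  intro h0
  exact hx (Matrix.eq_zero_of_mulVec_eq_zero (by rw [h]; exact one_ne_zero) h0)

lemma approx_min {n : ℕ} (G : Matrix (Fin (n+1)) (Fin (n+1)) ℝ)
    (hp : ∀ x, x ≠ 0 → 0 < qf G x) :
    ∃ A : Matrix (Fin (n+1)) (Fin (n+1)) ℤ, A.det = 1 ∧
      ∀ B : Matrix (Fin (n+1)) (Fin (n+1)) ℤ, B.det = 1 →
        qf G (rc A *ᵥ Pi.single 0 1) ≤ 2 * qf G (rc B *ᵥ Pi.single 0 1) := by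
  obtain ⟨c, hc, hq⟩ := qf_lower G hp
  set S := {r : ℝ | ∃ B : Matrix (Fin (n+1)) (Fin (n+1)) ℤ, B.det = 1 ∧
    r = qf G (rc B *ᵥ Pi.single 0 1)} with hS
  have hne : S.Nonempty := ⟨_, 1, by simp, rfl⟩
  have hlow : ∀ r ∈ S, c ≤ r := by
    rintro r ⟨B, hB, rfl⟩
    apply hq
    have h1 : rc B *ᵥ Pi.single 0 1 ≠ 0 := mulVec_ne _ (rc_det B hB) _ (by simp)
    obtain ⟨i, hi⟩ := Function.ne_iff.mp h1
    refine le_trans ?_ (norm_le_pi_norm _ i)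
    simp only [mulVec_single_one, col_apply, map_apply, Pi.zero_apply, eq_intCast, ne_eq,
      Int.cast_eq_zero, Real.norm_eq_abs] at hi ⊢
    exact_mod_cast Int.one_le_abs hi
  have hbd : BddBelow S := ⟨c, hlow⟩
  have hinf : c ≤ sInf S := le_csInf hne hlow
  obtain ⟨r, ⟨A, hA, rfl⟩, hr⟩ := exists_lt_of_csInf_lt hne (show sInf S < 2 * sInf S by linarith)
  refine ⟨A, hA, fun B hB => ?_⟩
  have := csInf_le hbd ⟨B, hB, rfl⟩
  linarith

/-- block matrix [1, m; 0, M] -/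
def blk {R : Type*} [CommRing R] {n : ℕ} (m : Fin n → R) (M : Matrix (Fin n) (Fin n) R) :
    Matrix (Fin (n+1)) (Fin (n+1)) R :=
  Matrix.of (Fin.cons (Fin.cons 1 m) (fun i => Fin.cons 0 (M i)))

lemma blk_det {R : Type*} [CommRing R] {n : ℕ} (m : Fin n → R) (M : Matrix (Fin n) (Fin n) R) :
    (blk m M).det = M.det := by
  rw [det_succ_column_zero, Fin.sum_univ_succ]
  have : (blk m M).submatrix (Fin.succAbove 0) Fin.succ = M := by
    ext i j; simp [blk]
  rw [this]
  simp [blk]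

lemma blk_zero {R : Type*} [CommRing R] {n : ℕ} (m : Fin n → R) (M : Matrix (Fin n) (Fin n) R)
    (x : Fin (n+1) → R) : (blk m M *ᵥ x) 0 = x 0 + m ⬝ᵥ (fun j => x (Fin.succ j)) := by
  simp [blk, mulVec, dotProduct, Fin.sum_univ_succ]

lemma blk_succ {R : Type*} [CommRing R] {n : ℕ} (m : Fin n → R) (M : Matrix (Fin n) (Fin n) R)
    (x : Fin (n+1) → R) (i : Fin n) :
    (blk m M *ᵥ x) i.succ = (M *ᵥ (fun j => x (Fin.succ j))) i := by
  simp [blk, mulVec, dotProduct, Fin.sum_univ_succ]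

lemma rc_blk {n : ℕ} (m : Fin n → ℤ) (M : Matrix (Fin n) (Fin n) ℤ) :
    rc (blk m M) = blk (fun j => (m j : ℝ)) (rc M) := by
  ext i j
  refine Fin.cases ?_ (fun i => ?_) i <;> refine Fin.cases ?_ (fun j => ?_) j <;> simp [blk]

theorem red (n : ℕ) : ∀ G : Matrix (Fin n) (Fin n) ℝ, Gᵀ = G → (∀ x, x ≠ 0 → 0 < qf G x) →
    ∃ A : Matrix (Fin n) (Fin n) ℤ, A.det = 1 ∧
    ∃ (U : Matrix (Fin n) (Fin n) ℝ) (D : Fin n → ℝ),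
      (∀ i, U i i = 1) ∧ (∀ i j, j < i → U i j = 0) ∧ (∀ i j, |U i j| ≤ 2) ∧
      (∀ i, 0 < D i) ∧ (∀ i j, i ≤ j → D i ≤ 4 ^ n * D j) ∧
      ∀ x, qf G (rc A *ᵥ x) = ∑ i, D i * (U *ᵥ x) i ^ 2 := by
  induction n with
  | zero =>
    intro G _ _
    exact ⟨1, by simp, 1, 1, by simp, fun i => i.elim0, fun i => i.elim0, fun i => i.elim0,
      fun i => i.elim0, fun x => by simp [qf]⟩
  | succ n ih =>
    intro G hs hp
    obtain ⟨A₁, hA₁, hmin⟩ := approx_min G hp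
    set G₁ := (rc A₁)ᵀ * G * rc A₁ with hG₁
    have hs₁ : G₁ᵀ = G₁ := by
      rw [hG₁, transpose_mul, transpose_mul, transpose_transpose, hs, Matrix.mul_assoc]
    have hq₁ : ∀ x, qf G₁ x = qf G (rc A₁ *ᵥ x) := fun x => qf_conj _ _ _
    have hp₁ : ∀ x, x ≠ 0 → 0 < qf G₁ x := fun x hx => by
      rw [hq₁]; exact hp _ (mulVec_ne _ (rc_det _ hA₁) _ hx)
    have h00 : qf G₁ (Pi.single 0 1) = G₁ 0 0 := by
      simp [qf]
    have hpos : 0 < G₁ 0 0 := by rw [← h00]; exact hp₁ _ (by simp)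
    have hsch := qf_schur G₁ hs₁ hpos.ne'
    set c : Fin n → ℝ := fun j => G₁ 0 (Fin.succ j) / G₁ 0 0 with hc
    set G' : Matrix (Fin n) (Fin n) ℝ := Matrix.of fun i j => G₁ (Fin.succ i) (Fin.succ j)
          - G₁ 0 (Fin.succ i) * G₁ 0 (Fin.succ j) / G₁ 0 0 with hG'
    have hs' : G'ᵀ = G' := by
      ext i j
      have h1 : G₁ j.succ i.succ = G₁ i.succ j.succ := by
        conv_lhs => rw [← hs₁, transpose_apply]
      simp only [hG', transpose_apply, of_apply, h1]
      ring
    have hp' : ∀ x, x ≠ 0 → 0 < qf G' x := by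
      intro x hx
      have h1 := hsch (Fin.cons (-(c ⬝ᵥ x)) x)
      simp only [Fin.cons_zero, Fin.cons_succ] at h1
      have h2 : qf G' x = qf G₁ (Fin.cons (-(c ⬝ᵥ x)) x) := by
        rw [h1]; ring
      rw [h2]
      apply hp₁
      intro h3
      apply hx
      ext i
      have := congrFun h3 i.succ
      simpa using this
    obtain ⟨A', hA', U', D', hU1, hU2, hU3, hD1, hD2, hq'⟩ := ih G' hs' hp'
    set v : Fin n → ℝ := c ᵥ* rc A' with hv
    -- size reduction
    let m : Fin n → ℤ := fun j => - round (v j) - 1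
    have hm : ∀ j, |1 + (v j + (m j : ℝ))| ≤ 1 / 2 := by
      intro j
      have := abs_sub_round (v j)
      have e : 1 + (v j + (m j : ℝ)) = v j - round (v j) := by
        simp only [m]; push_cast; ring
      rwa [e]
    set w : Fin n → ℝ := fun j => v j + (m j : ℝ) with hw
    have hmain : ∀ x, qf G (rc (A₁ * blk m A') *ᵥ x) =
        ∑ i, (Fin.cons (G₁ 0 0) D' : Fin (n+1) → ℝ) i * (blk w U' *ᵥ x) i ^ 2 := by
      intro x
      rw [rc_mul, ← mulVec_mulVec, ← hq₁, hsch, rc_blk, Fin.sum_univ_succ]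
      simp only [blk_zero, blk_succ, Fin.cons_zero, Fin.cons_succ]
      rw [show (fun j => (rc A' *ᵥ fun j => x (Fin.succ j)) j) = rc A' *ᵥ fun j => x (Fin.succ j)
        from rfl, hq', dotProduct_mulVec, ← hv]
      have e : w ⬝ᵥ (fun j => x (Fin.succ j)) = v ⬝ᵥ (fun j => x (Fin.succ j)) +
          (fun j => (m j : ℝ)) ⬝ᵥ (fun j => x (Fin.succ j)) := by
        rw [← add_dotProduct]; rfl
      rw [e]; ring
    have hdet : (A₁ * blk m A').det = 1 := by rw [det_mul, blk_det, hA₁, hA', one_mul]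
    refine ⟨A₁ * blk m A', hdet, blk w U', Fin.cons (G₁ 0 0) D', ?_, ?_, ?_, ?_, ?_, hmain⟩
    · intro i
      refine Fin.cases ?_ (fun i => ?_) i <;> simp [blk, hU1]
    · intro i j
      refine Fin.cases ?_ (fun i => ?_) i <;> refine Fin.cases ?_ (fun j => ?_) j
      · simp
      · simp
      · simp [blk]
      · intro h
        simpa [blk] using hU2 i j (by simpa using h)
    · intro i j
      refine Fin.cases ?_ (fun i => ?_) i <;> refine Fin.cases ?_ (fun j => ?_) j
      · simp [blk]
      · have := hm j
        have e : blk w U' 0 j.succ = w j := by simp [blk]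
        rw [e, abs_le]
        rw [abs_le] at this
        constructor <;> simp only [hw] <;> linarith
      · simp [blk]
      · simpa [blk] using hU3 i j
    · intro i
      refine Fin.cases ?_ (fun i => ?_) i
      · simpa using hpos
      · simpa using hD1 i
    · -- the key inequality
      have key : ∀ j : Fin n, G₁ 0 0 ≤ 4 ^ (n+1) * D' j := by
        intro j
        obtain ⟨k, rfl⟩ : ∃ k, n = k + 1 := ⟨n - 1, by have := j.2; omega⟩
        have h1 := hmin (A₁ * blk m A' * transvection 1 0 1) (by
          rw [det_mul, hdet, det_transvection_of_ne _ _ (by simp), one_mul])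
        rw [← hq₁, h00, rc_mul, ← mulVec_mulVec, hmain] at h1
        have e : rc (transvection (1 : Fin (k+1+1)) 0 (1:ℤ)) *ᵥ Pi.single 0 1 =
            Fin.cons 1 (Pi.single 0 1) := by
          ext i
          rw [mulVec_single_one]
          refine Fin.cases ?_ (fun i => ?_) i
          · simp [transvection]
          · refine Fin.cases ?_ (fun i => ?_) i
            · simp [transvection]
            · simp [transvection, Fin.ext_iff]
        rw [e, Fin.sum_univ_succ, blk_zero] at h1
        simp only [blk_succ, Fin.cons_zero, Fin.cons_succ] at h1
        rw [Fin.sum_univ_succ] at h1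
        have e0 : ∀ i : Fin (k+1), (U' *ᵥ fun j => (Pi.single 0 1 : Fin (k+1) → ℝ) j) i = U' i 0 := by
          intro i
          rw [show (fun j => (Pi.single 0 1 : Fin (k+1) → ℝ) j) = Pi.single 0 1 from rfl,
            mulVec_single_one, col_apply]
        simp only [e0, hU1] at h1
        rw [Finset.sum_eq_zero (fun i _ => by rw [hU2 _ _ (Fin.succ_pos i)]; ring)] at h1
        have e2 : (w ⬝ᵥ fun j => (Pi.single 0 1 : Fin (k+1) → ℝ) j) = w 0 := by
          rw [show (fun j => (Pi.single 0 1 : Fin (k+1) → ℝ) j) = Pi.single 0 1 from rfl,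
            dotProduct_single_one]
        rw [e2] at h1
        have h2 : (1 + w 0) ^ 2 ≤ 1 / 4 := by
          have := hm 0
          have h3 := sq_le_sq' (abs_le.mp this).1 (abs_le.mp this).2
          simp only [hw]
          linarith
        have h3 : G₁ 0 0 ≤ 4 * D' 0 := by nlinarith
        have h4 := hD2 0 j (Fin.zero_le j)
        rw [pow_succ]
        linarith
      intro i j
      refine Fin.cases ?_ (fun i => ?_) i <;> refine Fin.cases ?_ (fun j => ?_) j
      · intro _
        simp only [Fin.cons_zero]
        have : (1:ℝ) ≤ 4 ^ (n+1) := one_le_pow₀ (by norm_num)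
        nlinarith
      · intro _
        simpa using key j
      · intro h; simp at h
      · intro h
        simp only [Fin.cons_succ]
        have h1 := hD2 i j (by simpa using h)
        have h2 := hD1 j
        have h3 : (0:ℝ) < 4 ^ n := by positivity
        rw [pow_succ]
        nlinarith [mul_pos h3 h2]

lemma rv_sq {n : ℕ} (x : Fin n → ℝ) : rvNorm x ^ 2 = ∑ i, x i ^ 2 :=
  Real.sq_sqrt (Finset.sum_nonneg fun i _ => sq_nonneg _)

lemma rv_nonneg {n : ℕ} (x : Fin n → ℝ) : 0 ≤ rvNorm x := Real.sqrt_nonneg _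

lemma rv_bound {n : ℕ} (M : Matrix (Fin n) (Fin n) ℝ) (C : ℝ) (hC : 0 ≤ C)
    (h : ∀ x, rvNorm (M *ᵥ x) ^ 2 ≤ C ^ 2 * rvNorm x ^ 2) (x : Fin n → ℝ) (hx : rvNorm x ≤ 1) :
    rvNorm (M *ᵥ x) ≤ C := by
  refine abs_le_of_sq_le_sq ?_ hC |> fun h => (le_abs_self _).trans h
  refine (h x).trans ?_
  have : rvNorm x ^ 2 ≤ 1 := pow_le_one₀ (rv_nonneg x) hx
  nlinarith [sq_nonneg C]

lemma op_le {n : ℕ} (M : Matrix (Fin n) (Fin n) ℝ) (C : ℝ) (hC : 0 ≤ C)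
    (h : ∀ x, rvNorm (M *ᵥ x) ^ 2 ≤ C ^ 2 * rvNorm x ^ 2) : rOpNorm M ≤ C := by
  refine csSup_le ⟨_, 0, by simp [rvNorm], rfl⟩ ?_
  rintro r ⟨x, hx, rfl⟩
  exact rv_bound M C hC h x hx

lemma row_cs {n : ℕ} (M : Matrix (Fin n) (Fin n) ℝ) (x : Fin n → ℝ) (i : Fin n) :
    (M *ᵥ x) i ^ 2 ≤ (∑ j, M i j ^ 2) * rvNorm x ^ 2 := by
  rw [rv_sq]
  exact Finset.sum_mul_sq_le_sq_mul_sq Finset.univ (fun j => M i j) x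

lemma op_ge {n : ℕ} (M : Matrix (Fin n) (Fin n) ℝ) (x : Fin n → ℝ) (hx : rvNorm x ≤ 1) :
    rvNorm (M *ᵥ x) ≤ rOpNorm M := by
  refine le_csSup ⟨Real.sqrt (∑ i, ∑ j, M i j ^ 2), ?_⟩ ⟨x, hx, rfl⟩
  rintro r ⟨x, hx, rfl⟩
  refine rv_bound M _ (Real.sqrt_nonneg _) (fun x => ?_) x hx
  have h0 : 0 ≤ ∑ i, ∑ j, M i j ^ 2 :=
    Finset.sum_nonneg fun i _ => Finset.sum_nonneg fun j _ => sq_nonneg _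
  rw [Real.sq_sqrt h0, rv_sq, Finset.sum_mul]
  exact Finset.sum_le_sum fun i _ => row_cs M x i

lemma entry_le {n : ℕ} (M : Matrix (Fin n) (Fin n) ℝ) (i j : Fin n) : |M i j| ≤ rOpNorm M := by
  refine le_trans ?_ (op_ge M (Pi.single j 1) ?_)
  · refine abs_le_of_sq_le_sq ?_ (rv_nonneg _)
    rw [rv_sq, mulVec_single_one]
    exact Finset.single_le_sum (f := fun i => M.col j i ^ 2) (fun i _ => sq_nonneg _)
      (Finset.mem_univ i)
  · have : rvNorm (Pi.single j 1 : Fin n → ℝ) ^ 2 = 1 := by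
      rw [rv_sq]
      simp [Pi.single_apply]
    nlinarith [rv_nonneg (Pi.single j 1 : Fin n → ℝ)]

lemma op_lower {n : ℕ} (hn : 0 < n) (M : Matrix (Fin n) (Fin n) ℝ) (hM : M.det = 1) :
    1 / (n.factorial : ℝ) ≤ rOpNorm M := by
  have hf : (1 : ℝ) ≤ n.factorial := by exact_mod_cast Nat.factorial_pos n
  have h0 : 0 ≤ rOpNorm M := (abs_nonneg _).trans (entry_le M ⟨0, hn⟩ ⟨0, hn⟩)
  have h1 := Matrix.det_le (abv := AbsoluteValue.abs) (A := M) (x := rOpNorm M) (entry_le M)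
  rw [hM] at h1
  simp only [AbsoluteValue.abs_apply, abs_one, Fintype.card_fin, nsmul_eq_mul] at h1
  by_contra! h2
  have h3 : rOpNorm M ≤ 1 := h2.le.trans (by rw [div_le_one (by linarith)]; exact hf)
  have h4 : rOpNorm M ^ n ≤ rOpNorm M := by
    calc rOpNorm M ^ n ≤ rOpNorm M ^ 1 := pow_le_pow_of_le_one h0 h3 hn
      _ = _ := pow_one _
  rw [lt_div_iff₀ (by linarith)] at h2
  nlinarith

lemma qf_polar {n : ℕ} (M N : Matrix (Fin n) (Fin n) ℝ) (hM : Mᵀ = M) (hN : Nᵀ = N)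
    (h : ∀ x, qf M x = qf N x) : M = N := by
  have e : ∀ (L : Matrix (Fin n) (Fin n) ℝ) (i j : Fin n), qf L (Pi.single i 1 + Pi.single j 1) =
      L i i + L i j + L j i + L j j := by
    intro L i j
    simp [qf, mulVec_add, dotProduct_add, add_dotProduct]
    ring
  have e1 : ∀ (L : Matrix (Fin n) (Fin n) ℝ) (i : Fin n), qf L (Pi.single i 1) = L i i := by
    intro L i
    simp [qf]
  ext i j
  have h1 := h (Pi.single i 1 + Pi.single j 1)
  have h2 := h (Pi.single i 1)
  have h3 := h (Pi.single j 1)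
  rw [e, e] at h1
  rw [e1, e1] at h2 h3
  have h4 : M j i = M i j := by conv_lhs => rw [← hM, transpose_apply]
  have h5 : N j i = N i j := by conv_lhs => rw [← hN, transpose_apply]
  linarith

lemma qf_gram {n : ℕ} (H : Matrix (Fin n) (Fin n) ℝ) (x : Fin n → ℝ) :
    qf (Hᵀ * H) x = rvNorm (H *ᵥ x) ^ 2 := by
  rw [rv_sq, qf, ← mulVec_mulVec, dotProduct_mulVec, vecMul_transpose]
  simp [dotProduct, sq]

/-- Siegel reduction of a unimodular real matrix. -/
theorem siegel (d : ℕ) (hd : 0 < d) (H : Matrix (Fin d) (Fin d) ℝ) (hH : H.det = 1) :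
    ∃ A : Matrix (Fin d) (Fin d) ℤ, A.det = 1 ∧
    ∃ (U : Matrix (Fin d) (Fin d) ℝ) (D : Fin d → ℝ),
      (∀ i, U i i = 1) ∧ (∀ i j, j < i → U i j = 0) ∧ (∀ i j, |U i j| ≤ 2) ∧
      (∀ i, 0 < D i) ∧ (∀ i j, i ≤ j → D i ≤ 4 ^ d * D j) ∧ D ⟨0, hd⟩ ≤ 4 ^ d ∧
      ∀ x, rvNorm ((H * rc A) *ᵥ x) ^ 2 = ∑ i, D i * (U *ᵥ x) i ^ 2 := by
  obtain ⟨A, hA, U, D, h1, h2, h3, h4, h5, h6⟩ := red d (Hᵀ * H)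
    (by rw [transpose_mul, transpose_transpose]) (fun x hx => by
      have hne := mulVec_ne H hH x hx
      rw [qf_gram, rv_sq]
      obtain ⟨i, hi⟩ := Function.ne_iff.mp hne
      exact Finset.sum_pos' (fun i _ => sq_nonneg _) ⟨i, Finset.mem_univ i, sq_pos_of_ne_zero hi⟩)
  have h7 : ∀ x, rvNorm ((H * rc A) *ᵥ x) ^ 2 = ∑ i, D i * (U *ᵥ x) i ^ 2 := by
    intro x
    rw [← h6, qf_gram, mulVec_mulVec]
  refine ⟨A, hA, U, D, h1, h2, h3, h4, h5, ?_, h7⟩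
  have hm : (H * rc A)ᵀ * (H * rc A) = Uᵀ * diagonal D * U := by
    refine qf_polar _ _ ?_ ?_ ?_
    · rw [transpose_mul, transpose_transpose]
    · rw [transpose_mul, transpose_mul, transpose_transpose, diagonal_transpose, Matrix.mul_assoc]
    · intro x
      rw [qf_gram, h7, qf_conj]
      simp only [qf, dotProduct, mulVec_diagonal]
      exact Finset.sum_congr rfl fun i _ => by ring
  have hU : U.det = 1 := by
    rw [det_of_isUpperTriangular (fun i j hij => h2 i j hij)]
    simp [h1]
  have hprod : ∏ i, D i = 1 := by
    have := congrArg det hm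
    simp only [det_mul, det_transpose, hH, rc_det A hA, hU, det_diagonal] at this
    linarith
  obtain ⟨i, hi⟩ : ∃ i, D i ≤ 1 := by
    by_contra! hc
    have : 1 < ∏ i, D i := by
      calc (1:ℝ) = ∏ i : Fin d, 1 := by simp
        _ < ∏ i, D i := Finset.prod_lt_prod_of_nonempty (fun _ _ => one_pos) (fun i _ => hc i)
          ⟨⟨0, hd⟩, Finset.mem_univ _⟩
    linarith
  have := h5 ⟨0, hd⟩ i (by simp [Fin.le_def])
  have h8 : (0:ℝ) < 4 ^ d := by positivity
  nlinarith

lemma conj_sub_pow {n k : ℕ} (P E Q : Matrix (Fin n) (Fin n) ℝ) (hQP : Q * P = 1) :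
    (P * E * Q) ^ (k+1) = P * E ^ (k+1) * Q := by
  induction k with
  | zero => simp
  | succ k ih =>
    rw [pow_succ, ih, pow_succ E (k+1)]
    calc P * E ^ (k+1) * Q * (P * E * Q) = P * E ^ (k+1) * (Q * P) * E * Q := by
          simp only [Matrix.mul_assoc]
      _ = _ := by rw [hQP]; simp only [Matrix.mul_assoc, Matrix.one_mul]

/-- **Quantitative Kazhdan–Margulis lemma.** For every `d ≥ 2` there are `k₀, l₀ > 0` such
that for every `h ∈ SL_d(ℝ)` the group `h SL_d(ℤ) h⁻¹` contains a nontrivial unipotent `u`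
with `‖u - 1‖ ≤ l₀ ‖π(h)‖^{-k₀}`, where `‖π(h)‖ = inf_{γ ∈ SL_d(ℤ)} ‖h γ‖`. -/
theorem quantitative_kazhdan_margulis (d : ℕ) (hd : 2 ≤ d) :
    ∃ k₀ l₀ : ℝ, 0 < k₀ ∧ 0 < l₀ ∧
      ∀ h : Matrix.SpecialLinearGroup (Fin d) ℝ,
        ∃ γ : Matrix.SpecialLinearGroup (Fin d) ℤ,
          h * Matrix.SpecialLinearGroup.map (n := Fin d) (Int.castRingHom ℝ) γ * h⁻¹ ≠ 1 ∧
          (((h * Matrix.SpecialLinearGroup.map (n := Fin d) (Int.castRingHom ℝ) γ * h⁻¹ :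
              Matrix.SpecialLinearGroup (Fin d) ℝ) : Matrix (Fin d) (Fin d) ℝ) - 1) ^ d = 0 ∧
          rOpNorm (((h * Matrix.SpecialLinearGroup.map (n := Fin d) (Int.castRingHom ℝ) γ *
                h⁻¹ : Matrix.SpecialLinearGroup (Fin d) ℝ) :
              Matrix (Fin d) (Fin d) ℝ) - 1) ≤
            l₀ * (sInf {r : ℝ | ∃ g : Matrix.SpecialLinearGroup (Fin d) ℤ,
                r = rOpNorm ((h * Matrix.SpecialLinearGroup.map (n := Fin d)
                    (Int.castRingHom ℝ) g : Matrix.SpecialLinearGroup (Fin d) ℝ) :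
                  Matrix (Fin d) (Fin d) ℝ)}) ^ (-k₀) := by
  have hd0 : 0 < d := by omega
  refine ⟨1, 2 ^ d * (2 * d * 2 ^ d), one_pos, by positivity, fun h => ?_⟩
  obtain ⟨A, hA, U, D, h1, h2, h3, h4, h5, h6, h7⟩ := siegel d hd0 h.1 h.2
  let o : Fin d := ⟨0, hd0⟩
  let l : Fin d := ⟨d - 1, by omega⟩
  have hol : o ≠ l := by
    simp only [o, l, ne_eq, Fin.mk.injEq]; omega
  have hl : ∀ i, i ≤ l := fun i => by
    simp only [Fin.le_def, l]; omega
  let g : Matrix.SpecialLinearGroup (Fin d) ℤ := ⟨A, hA⟩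
  let t : Matrix.SpecialLinearGroup (Fin d) ℤ :=
    ⟨transvection o l 1, det_transvection_of_ne _ _ hol _⟩
  let φ := Matrix.SpecialLinearGroup.map (n := Fin d) (Int.castRingHom ℝ)
  let p : Matrix.SpecialLinearGroup (Fin d) ℝ := h * φ g
  let E : Matrix (Fin d) (Fin d) ℝ := Matrix.single o l 1
  have hφt : (φ t : Matrix (Fin d) (Fin d) ℝ) = 1 + E := by
    change (transvection o l (1:ℤ)).map (Int.castRingHom ℝ) = _
    ext i j
    simp only [transvection, map_apply, Matrix.add_apply, E, single_apply, one_apply, map_add]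
    split_ifs <;> simp
  have hu : h * φ (g * t * g⁻¹) * h⁻¹ = p * φ t * p⁻¹ := by
    simp only [p, map_mul, map_inv, _root_.mul_inv_rev, mul_assoc]
  have hP : (p : Matrix (Fin d) (Fin d) ℝ) = h.1 * rc A := rfl
  set P : Matrix (Fin d) (Fin d) ℝ := (p : Matrix (Fin d) (Fin d) ℝ) with hPdef
  set Q : Matrix (Fin d) (Fin d) ℝ := ((p⁻¹ : Matrix.SpecialLinearGroup (Fin d) ℝ) :
    Matrix (Fin d) (Fin d) ℝ) with hQdef
  have hPQ : P * Q = 1 := by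
    rw [hPdef, hQdef, ← Matrix.SpecialLinearGroup.coe_mul, mul_inv_cancel,
      Matrix.SpecialLinearGroup.coe_one]
  have hQP : Q * P = 1 := by
    rw [hPdef, hQdef, ← Matrix.SpecialLinearGroup.coe_mul, inv_mul_cancel,
      Matrix.SpecialLinearGroup.coe_one]
  have hum : ((p * φ t * p⁻¹ : Matrix.SpecialLinearGroup (Fin d) ℝ) :
      Matrix (Fin d) (Fin d) ℝ) - 1 = P * E * Q := by
    rw [Matrix.SpecialLinearGroup.coe_mul, Matrix.SpecialLinearGroup.coe_mul, hφt,
      ← hPdef, ← hQdef, Matrix.mul_add, Matrix.add_mul, Matrix.mul_one, hPQ, add_sub_cancel_left]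
  refine ⟨g * t * g⁻¹, ?_⟩
  change h * φ (g * t * g⁻¹) * h⁻¹ ≠ 1 ∧ (((h * φ (g * t * g⁻¹) * h⁻¹ :
    Matrix.SpecialLinearGroup (Fin d) ℝ) : Matrix (Fin d) (Fin d) ℝ) - 1) ^ d = 0 ∧
    rOpNorm (((h * φ (g * t * g⁻¹) * h⁻¹ :
    Matrix.SpecialLinearGroup (Fin d) ℝ) : Matrix (Fin d) (Fin d) ℝ) - 1) ≤ _
  rw [hu, hum]
  refine ⟨?_, ?_, ?_⟩
  · intro hc
    have h8 : φ t = 1 := by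
      have := mul_inv_eq_one.mp hc
      simpa using this
    have h9 : (1 + E) o l = (1 : Matrix (Fin d) (Fin d) ℝ) o l := by
      rw [← hφt, h8, Matrix.SpecialLinearGroup.coe_one]
    simp [E] at h9
  · obtain ⟨k, rfl⟩ : ∃ k, d = k + 1 + 1 := ⟨d - 2, by omega⟩
    rw [conj_sub_pow P E Q hQP]
    have hE : E ^ 2 = 0 := by
      rw [sq]
      exact single_mul_single_of_ne (h := hol.symm) ..
    rw [pow_succ E (k+1), pow_succ E k, Matrix.mul_assoc (E ^ k), ← sq, hE]
    simp
  · set s := sInf {r : ℝ | ∃ g : Matrix.SpecialLinearGroup (Fin d) ℤ,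
                r = rOpNorm ((h * Matrix.SpecialLinearGroup.map (n := Fin d)
                    (Int.castRingHom ℝ) g : Matrix.SpecialLinearGroup (Fin d) ℝ) :
                  Matrix (Fin d) (Fin d) ℝ)} with hs
    have hlow : ∀ r ∈ {r : ℝ | ∃ g : Matrix.SpecialLinearGroup (Fin d) ℤ,
                r = rOpNorm ((h * Matrix.SpecialLinearGroup.map (n := Fin d)
                    (Int.castRingHom ℝ) g : Matrix.SpecialLinearGroup (Fin d) ℝ) :
                  Matrix (Fin d) (Fin d) ℝ)}, 1 / (d.factorial : ℝ) ≤ r := by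
      rintro r ⟨g, rfl⟩
      exact op_lower hd0 _ (Matrix.SpecialLinearGroup.det_coe _)
    have hs0 : 0 < s := lt_of_lt_of_le (by positivity) (le_csInf ⟨_, 1, rfl⟩ hlow)
    have hsP : s ≤ rOpNorm P := csInf_le ⟨_, hlow⟩ ⟨g, rfl⟩
    set a := Real.sqrt (D l) with ha
    have ha0 : 0 < a := Real.sqrt_pos.mpr (h4 l)
    have ha2 : a ^ 2 = D l := Real.sq_sqrt (h4 l).le
    have h22 : ((2:ℝ) ^ d) ^ 2 = 4 ^ d := by rw [← pow_mul, mul_comm, pow_mul]; norm_num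
    have hPle : rOpNorm P ≤ 2 * d * 2 ^ d * a := by
      refine op_le P _ (by positivity) fun x => ?_
      rw [hP, h7]
      have hi : ∀ i, D i * (U *ᵥ x) i ^ 2 ≤ 4 ^ d * D l * (d * 4 * rvNorm x ^ 2) := by
        intro i
        have e1 : (U *ᵥ x) i ^ 2 ≤ d * 4 * rvNorm x ^ 2 := by
          refine (row_cs U x i).trans ?_
          refine mul_le_mul_of_nonneg_right ?_ (sq_nonneg _)
          calc ∑ j, U i j ^ 2 ≤ ∑ j : Fin d, (4:ℝ) := by
                refine Finset.sum_le_sum fun j _ => ?_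
                have := sq_le_sq' (abs_le.mp (h3 i j)).1 (abs_le.mp (h3 i j)).2
                linarith
            _ = d * 4 := by simp
        exact mul_le_mul (h5 i l (hl i)) e1 (sq_nonneg _)
          (mul_nonneg (by positivity) (h4 l).le)
      calc ∑ i, D i * (U *ᵥ x) i ^ 2 ≤ ∑ i : Fin d, 4 ^ d * D l * (d * 4 * rvNorm x ^ 2) :=
            Finset.sum_le_sum fun i _ => hi i
        _ = (2 * d * 2 ^ d * a) ^ 2 * rvNorm x ^ 2 := by
            simp only [Finset.sum_const, Finset.card_univ, Fintype.card_fin, nsmul_eq_mul, mul_pow,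
              h22, ha2]
            ring
    have hule : rOpNorm (P * E * Q) ≤ 2 ^ d / a := by
      refine op_le _ _ (by positivity) fun x => ?_
      set y := Q *ᵥ x with hy
      have hx : x = P *ᵥ y := by rw [hy, mulVec_mulVec, hPQ, one_mulVec]
      have e1 : (P * E * Q) *ᵥ x = P *ᵥ (y l • Pi.single o 1) := by
        rw [← mulVec_mulVec, ← mulVec_mulVec, ← hy]
        congr 1
        ext i
        simp only [E, single_mulVec, Pi.smul_apply, Pi.single_apply, smul_eq_mul]
        simp [Function.update_apply]
      have e2 : rvNorm ((P * E * Q) *ᵥ x) ^ 2 = D o * y l ^ 2 := by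
        rw [e1, hP, h7, Finset.sum_eq_single o]
        · rw [mulVec_smul, mulVec_single_one]
          simp [h1]
        · intro i _ hi
          rw [mulVec_smul, mulVec_single_one]
          have : U i o = 0 := h2 i o (by
            rw [Fin.lt_def]
            have : (i : ℕ) ≠ 0 := fun hh => hi (Fin.ext hh)
            simp only [o]; omega)
          simp [this]
        · simp
      have e3 : D l * y l ^ 2 ≤ rvNorm x ^ 2 := by
        rw [hx, hP, h7]
        have e4 : (U *ᵥ y) l = y l := by
          rw [mulVec, dotProduct, Finset.sum_eq_single l]
          · rw [h1, one_mul]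
          · intro j _ hj
            rw [h2 l j (lt_of_le_of_ne (hl j) hj), zero_mul]
          · simp
        have := Finset.single_le_sum (f := fun i => D i * (U *ᵥ y) i ^ 2)
          (fun i _ => mul_nonneg (h4 i).le (sq_nonneg _)) (Finset.mem_univ l)
        simpa only [e4] using this
      rw [e2, div_pow, h22, ha2, div_mul_eq_mul_div, le_div_iff₀ (h4 l)]
      calc D o * y l ^ 2 * D l = D o * (D l * y l ^ 2) := by ring
        _ ≤ 4 ^ d * rvNorm x ^ 2 := mul_le_mul h6 e3
            (mul_nonneg (h4 l).le (sq_nonneg _)) (by positivity)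
    refine hule.trans ?_
    rw [Real.rpow_neg_one, ← div_eq_mul_inv, div_le_div_iff₀ ha0 hs0]
    calc (2:ℝ) ^ d * s ≤ 2 ^ d * (2 * d * 2 ^ d * a) :=
          mul_le_mul_of_nonneg_left (hsP.trans hPle) (by positivity)
      _ = _ := by ring
end
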